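/- (Orthogonality of Askey-Wilson polynomials) Let 0<q<1 and a,b,c,d∈ℂ with |a|,|b|,|c|,|d|<1. Then for all m,n∈ℤ_{≥0}: (1/(2π)) ∫_0^π p_n(cos θ; a,b,c,d | q) p_m(cos θ; a,b,c,d | q) w_{a,b,c,d}(e^{iθ}) dθ = δ_{m,n} h_n, where h_0 := (abcd;q)_∞ / (q, ab, ac, ad, bc, bd, cd;q)_∞ and for n≥1, h_n := h_0 · (1-q^{n-1}abcd)(q, ab, ac, ad, bc, bd, cd;q)_n / ((1-q^{2n-1}abcd)(abcd;q)_n). Moreover, if a,b,c,d are real, or if the non-real ones among them occur in complex-conjugate pairs, then the measure w_{a,b,c,d}(e^{iθ}) dθ on [0,π] is positive. -/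

import Mathlib

/-!
The proof has three parts: the evaluation of the Askey-Wilson integral
`I(a,b,c,d) = ∫_0^π w_{a,b,c,d}(e^{iθ}) dθ`, the orthogonality, and the positivity of the weight.

**The integral.** Let `H(z) = w(z) ∏_t (1-tz) / (z(1-z²))`, the product being over `t = a,b,c,d`.
It is holomorphic on `1 ≤ |z| < 1/q`, so its mean over the unit circle equals its mean over
`|z| = q^{-1/2}`; there `H(1/(qz)) = -H(z)`, so the mean vanishes (`awH_integral`). As
`H(z) + H(1/z)` is `w(z)` times a polynomial of degree one in `z + 1/z`, this gives the first
moment of `w`, hence the functional equation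
`(1-abcd) I(aq,b,c,d) = (1-ab)(1-ac)(1-ad) I(a,b,c,d)` (`awI_shift`). The quotient of `I` by the
expected closed form is thus invariant under `a ↦ aq` and, by symmetry, under the same shift of the
other parameters; iterating and using continuity at `0`, it is constant (`awF_const`). The
constant is found at `(q^{1/2},-q^{1/2},q,-q)`, where `w(z) = (1-z²)(1-z^{-2})`, with the help of
the Euler identity `(-q;q)_∞ (q;q²)_∞ = 1` (`awI_eval`).

**Orthogonality.** With `φ_k(·;t) = (te^{iθ},te^{-iθ};q)_k`, the product
`φ_k(·;a) φ_j(·;b) w_{a,b,c,d}` is `w_{aq^k,bq^j,c,d}`. So pairing `p_n`, expanded in the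
`φ_k(·;a)`, with `φ_j(·;b)` gives a sum `∑_k (q^{-n};q)_k q^k / (q;q)_k · f(q^k)` (`awp_pair`).
For `j < n` the function `f` is a polynomial of degree `n-1`, which such a sum annihilates
(`awp_pair_lt`); for `j = n` it is a polynomial of degree `n` over a linear factor, and the sum is
explicit (`awp_pair_eq`). For `b ≠ 0` the `φ_j(·;b)` span the polynomials, and the coefficient of
`φ_n(·;b)` in `p_n` is explicit, which yields the orthogonality relations and `h_n`. The case
`b = 0` follows since both sides are continuous in `b`.

**Positivity.** On the unit circle `conj z = 1/z`, so for conjugation-invariant parameters the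
weight is `|(z²;q)_∞|² / |∏_t (tz;q)_∞|²`.
-/

noncomputable section

/-- The finite q-shifted factorial `(a;q)_k`. -/
def qp (q a : ℂ) (k : ℕ) : ℂ := ∏ j ∈ Finset.range k, (1 - a * q ^ j)

/-- The infinite q-shifted factorial `(a;q)_∞`. -/
def qpi (q a : ℂ) : ℂ := ∏' j : ℕ, (1 - a * q ^ j)

/-- The Askey-Wilson weight
`w_{a,b,c,d}(z) = (z²,z^{-2};q)_∞ / (az,az^{-1},bz,bz^{-1},cz,cz^{-1},dz,dz^{-1};q)_∞`. -/
def AWw (q a b c d z : ℂ) : ℂ :=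
  qpi q (z ^ 2) * qpi q (z⁻¹ ^ 2) /
    (qpi q (a * z) * qpi q (a * z⁻¹) * qpi q (b * z) * qpi q (b * z⁻¹) *
      qpi q (c * z) * qpi q (c * z⁻¹) * qpi q (d * z) * qpi q (d * z⁻¹))

/-- The Askey-Wilson polynomial `p_n(x; a,b,c,d | q)`, written with
`(ae^{iθ};q)_k (ae^{-iθ};q)_k = ∏_{j<k} (1 - 2aq^j x + a²q^{2j})`, `x = cos θ`. -/
def awp (q a b c d : ℂ) (n : ℕ) (x : ℂ) : ℂ :=
  a ^ (-(n : ℤ)) * (qp q (a * b) n * qp q (a * c) n * qp q (a * d) n) *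
    ∑ k ∈ Finset.range (n + 1),
      qp q (((q : ℂ) ^ n)⁻¹) k * qp q (q ^ ((n : ℤ) - 1) * (a * b * c * d)) k * q ^ k *
          (∏ j ∈ Finset.range k, (1 - 2 * a * q ^ j * x + a ^ 2 * q ^ (2 * j))) /
        (qp q (a * b) k * qp q (a * c) k * qp q (a * d) k * qp q q k)

/-- The quadratic norms `h_n` of the Askey-Wilson polynomials. -/
def awh (q a b c d : ℂ) (n : ℕ) : ℂ :=
  (qpi q (a * b * c * d) /
      (qpi q q * qpi q (a * b) * qpi q (a * c) * qpi q (a * d) *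
        qpi q (b * c) * qpi q (b * d) * qpi q (c * d))) *
    (if n = 0 then 1 else
      (1 - q ^ (n - 1) * (a * b * c * d)) *
          (qp q q n * qp q (a * b) n * qp q (a * c) n * qp q (a * d) n *
            qp q (b * c) n * qp q (b * d) n * qp q (c * d) n) /
        ((1 - q ^ (2 * n - 1) * (a * b * c * d)) * qp q (a * b * c * d) n))

/-! ### The infinite q-shifted factorial -/

lemma qpi_summable {q : ℂ} (hq : ‖q‖ < 1) (x : ℂ) : Summable fun j : ℕ => ‖-(x * q ^ j)‖ := by
  simp only [norm_neg, norm_mul, norm_pow]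
  exact (summable_geometric_of_lt_one (norm_nonneg _) hq).mul_left _

lemma qpi_multipliable {q : ℂ} (hq : ‖q‖ < 1) (x : ℂ) :
    Multipliable fun j : ℕ => (1 - x * q ^ j) := by
  simpa [sub_eq_add_neg] using multipliable_one_add_of_summable (qpi_summable hq x)

lemma qpi_succ {q : ℂ} (hq : ‖q‖ < 1) (x : ℂ) : qpi q x = (1 - x) * qpi q (q * x) := by
  have h : Multipliable fun j : ℕ => (1 - x * q ^ (j + 1)) := by
    refine (qpi_multipliable hq (q * x)).congr fun j => ?_
    ring
  have h2 := tprod_eq_zero_mul' (f := fun j : ℕ => 1 - x * q ^ j) h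
  have h3 : ∏' j : ℕ, (1 - x * q ^ (j + 1)) = qpi q (q * x) :=
    tprod_congr fun j => by ring
  rw [qpi, h2, h3, pow_zero, mul_one]

lemma one_sub_ne_zero {x : ℂ} (hx : ‖x‖ < 1) : 1 - x ≠ 0 := by
  rw [sub_ne_zero]
  rintro rfl
  simp at hx

lemma norm_mul_lt_one {x y : ℂ} (hx : ‖x‖ < 1) (hy : ‖y‖ < 1) : ‖x * y‖ < 1 := by
  rw [norm_mul]
  exact mul_lt_one_of_nonneg_of_lt_one_left (norm_nonneg _) hx hy.le

lemma norm_mul_pow_lt_one {q x : ℂ} (hq : ‖q‖ < 1) (hx : ‖x‖ < 1) (j : ℕ) : ‖x * q ^ j‖ < 1 := by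
  rw [norm_mul, norm_pow]
  exact mul_lt_one_of_nonneg_of_lt_one_left (norm_nonneg _) hx (pow_le_one₀ (norm_nonneg _) hq.le)

lemma qpi_ne_zero {q x : ℂ} (hq : ‖q‖ < 1) (hx : ‖x‖ < 1) : qpi q x ≠ 0 := by
  have := tprod_one_add_ne_zero_of_summable (f := fun j : ℕ => -(x * q ^ j)) (fun j => by
    simpa [sub_eq_add_neg] using one_sub_ne_zero (norm_mul_pow_lt_one hq hx j)) (qpi_summable hq x)
  simpa [qpi, sub_eq_add_neg] using this

lemma qp_ne_zero {q x : ℂ} (hq : ‖q‖ < 1) (hx : ‖x‖ < 1) (k : ℕ) : qp q x k ≠ 0 :=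
  Finset.prod_ne_zero_iff.2 fun j _ => one_sub_ne_zero (norm_mul_pow_lt_one hq hx j)

lemma qpi_differentiable {q : ℂ} (hq : ‖q‖ < 1) : Differentiable ℂ (qpi q) := by
  have key : HasProdLocallyUniformlyOn (fun (j : ℕ) (x : ℂ) => 1 + -(x * q ^ j))
      (fun x => ∏' j : ℕ, (1 + -(x * q ^ j))) Set.univ := by
    apply hasProdLocallyUniformlyOn_of_forall_compact isOpen_univ
    intro K _ hcK
    obtain ⟨M, hM⟩ := hcK.isBounded.exists_norm_le
    refine ((summable_geometric_of_lt_one (norm_nonneg _) hq).mul_left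
      M).hasProdUniformlyOn_nat_one_add hcK (.of_forall fun n x hx => ?_) (fun _ => by fun_prop)
    simp only [norm_neg, norm_mul, norm_pow]
    gcongr
    exact hM x hx
  have h2 := key.differentiableOn (.of_forall fun _ => by
    simpa [Finset.prod_fn] using DifferentiableOn.finsetProd (fun _ _ => by fun_prop)) isOpen_univ
  rw [differentiableOn_univ] at h2
  simpa [qpi, sub_eq_add_neg, funext_iff] using! h2

lemma qpi_continuous {q : ℂ} (hq : ‖q‖ < 1) : Continuous (qpi q) :=
  (qpi_differentiable hq).continuous

lemma qpi_zero (q : ℂ) : qpi q 0 = 1 := by simp [qpi]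

/-- `(x;q)_∞ (-x;q)_∞ = (x²;q²)_∞`. -/
lemma qpi_mul_neg {q : ℂ} (hq : ‖q‖ < 1) (x : ℂ) :
    qpi q x * qpi q (-x) = qpi (q ^ 2) (x ^ 2) := by
  unfold qpi
  rw [← (qpi_multipliable hq x).tprod_mul (qpi_multipliable hq (-x))]
  refine tprod_congr fun j => ?_
  ring

/-- Splitting `(x;q)_∞` into its factors of even and of odd index. -/
lemma qpi_even_odd {q : ℂ} (hq : ‖q‖ < 1) (x : ℂ) :
    qpi q x = qpi (q ^ 2) x * qpi (q ^ 2) (q * x) := by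
  have hq2 : ‖q ^ 2‖ < 1 := by
    rw [norm_pow]
    exact pow_lt_one₀ (norm_nonneg _) hq two_ne_zero
  unfold qpi
  rw [← tprod_even_mul_odd (f := fun j : ℕ => 1 - x * q ^ j)]
  · congr 1
    · exact tprod_congr fun j => by rw [pow_mul]
    · exact tprod_congr fun j => by rw [← pow_mul]; ring
  · exact (qpi_multipliable hq2 x).congr fun j => by rw [pow_mul]
  · exact (qpi_multipliable hq2 (q * x)).congr fun j => by rw [← pow_mul]; ring

/-- The Euler identity `(-q;q)_∞ (q;q²)_∞ = 1`. -/
lemma qpi_euler {q : ℂ} (hq : ‖q‖ < 1) : qpi q (-q) * qpi (q ^ 2) q = 1 := by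
  have h1 := qpi_mul_neg hq q
  have h2 := qpi_even_odd hq q
  have h3 := qpi_ne_zero hq hq
  have h4 : qpi (q ^ 2) (q ^ 2) ≠ 0 := by
    intro h
    rw [← sq, h, mul_zero] at h2
    exact h3 h2
  rw [← sq] at h2
  apply mul_right_cancel₀ h4
  rw [mul_assoc, ← h2, ← h1]
  ring

/-- The quadruple factorization `(qx²;q)_∞ = (sx,-sx,qx,-qx;q)_∞` with `s² = q`. -/
lemma qpi_quad {q s : ℂ} (hq : ‖q‖ < 1) (hs : s ^ 2 = q) (x : ℂ) :
    qpi q (q * x ^ 2) =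
      qpi q (s * x) * qpi q (-s * x) * (qpi q (q * x) * qpi q (-q * x)) := by
  have h1 := qpi_mul_neg hq (s * x)
  have h2 := qpi_mul_neg hq (q * x)
  rw [neg_mul, neg_mul, h1, h2, qpi_even_odd hq]
  congr 2 <;> rw [← hs] <;> ring

lemma qpi_conj (q : ℝ) (x : ℂ) (hq : ‖(q : ℂ)‖ < 1) :
    starRingEnd ℂ (qpi q x) = qpi q (starRingEnd ℂ x) := by
  unfold qpi
  rw [(qpi_multipliable hq x).map_tprod (starRingEnd ℂ) Complex.continuous_conj]
  refine tprod_congr fun j => ?_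
  simp

/-! ### The functional equation of the Askey-Wilson integral -/

/-- The Askey-Wilson integral `∫_0^π w_{a,b,c,d}(e^{iθ}) dθ`, without the factor `1/(2π)`. -/
def awI (q a b c d : ℂ) : ℂ :=
  ∫ θ in (0 : ℝ)..Real.pi, AWw q a b c d (Complex.exp ((θ : ℂ) * Complex.I))

/-- The one-sided companion of the weight,
`H(z) = (qz², z^{-2};q)_∞ / (z ∏_t (qtz, t/z;q)_∞)` with `t` running over `a,b,c,d`.
Away from `z = ±1` it is the weight times `∏_t (1-tz) / (z(1-z²))`. -/
def awH (q a b c d z : ℂ) : ℂ :=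
  qpi q (q * z ^ 2) * qpi q (z⁻¹ ^ 2) /
    (z * (qpi q (q * (a * z)) * qpi q (a * z⁻¹) * qpi q (q * (b * z)) * qpi q (b * z⁻¹) *
      qpi q (q * (c * z)) * qpi q (c * z⁻¹) * qpi q (q * (d * z)) * qpi q (d * z⁻¹)))

lemma norm_inv_eq_one {z : ℂ} (hz : ‖z‖ = 1) : ‖z⁻¹‖ = 1 := by rw [norm_inv, hz, inv_one]

lemma norm_mul_lt_one' {t z : ℂ} (ht : ‖t‖ < 1) (hz : ‖z‖ = 1) : ‖t * z‖ < 1 := by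
  rw [norm_mul, hz, mul_one]
  exact ht

lemma ne_zero_of_norm_one {z : ℂ} (hz : ‖z‖ = 1) : z ≠ 0 := by
  rintro rfl
  simp at hz

lemma AWw_continuous {X : Type*} [TopologicalSpace X] {q : ℂ} (hq : ‖q‖ < 1)
    {a b c d z : X → ℂ} (ha : Continuous a) (hb : Continuous b) (hc : Continuous c)
    (hd : Continuous d) (hz : Continuous z) (hA : ∀ x, ‖a x‖ < 1) (hB : ∀ x, ‖b x‖ < 1)
    (hC : ∀ x, ‖c x‖ < 1) (hD : ∀ x, ‖d x‖ < 1) (hZ : ∀ x, ‖z x‖ = 1) :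
    Continuous fun x => AWw q (a x) (b x) (c x) (d x) (z x) := by
  have hzi : Continuous fun x => (z x)⁻¹ := hz.inv₀ fun x => ne_zero_of_norm_one (hZ x)
  have hp := qpi_continuous hq
  unfold AWw
  refine Continuous.div (by fun_prop) (by fun_prop) fun x => ?_
  have hZi := norm_inv_eq_one (hZ x)
  have n : ∀ t y : ℂ, ‖t‖ < 1 → ‖y‖ = 1 → qpi q (t * y) ≠ 0 := fun t y ht hy =>
    qpi_ne_zero hq (norm_mul_lt_one' ht hy)
  simp only [ne_eq, mul_eq_zero, not_or]
  exact ⟨⟨⟨⟨⟨⟨⟨n _ _ (hA x) (hZ x), n _ _ (hA x) hZi⟩, n _ _ (hB x) (hZ x)⟩, n _ _ (hB x) hZi⟩,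
    n _ _ (hC x) (hZ x)⟩, n _ _ (hC x) hZi⟩, n _ _ (hD x) (hZ x)⟩, n _ _ (hD x) hZi⟩

/-- The symmetrization `H(z) + H(1/z)` is the weight times a polynomial of degree one in
`z + 1/z`. -/
lemma awH_add {q a b c d z : ℂ} (hq : ‖q‖ < 1) (hA : ‖a‖ < 1) (hB : ‖b‖ < 1) (hC : ‖c‖ < 1)
    (hD : ‖d‖ < 1) (hz : ‖z‖ = 1) :
    awH q a b c d z + awH q a b c d z⁻¹ =
      ((1 - a * b * c * d) * (z + z⁻¹) -
        (a + b + c + d - (a * b * c + a * b * d + a * c * d + b * c * d))) *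
        AWw q a b c d z := by
  have hz0 := ne_zero_of_norm_one hz
  have hzi := norm_inv_eq_one hz
  have n : ∀ t y : ℂ, ‖t‖ < 1 → ‖y‖ = 1 → 1 - t * y ≠ 0 ∧ qpi q (q * (t * y)) ≠ 0 :=
    fun t y ht hy => ⟨one_sub_ne_zero (norm_mul_lt_one' ht hy),
      qpi_ne_zero hq (norm_mul_lt_one hq (norm_mul_lt_one' ht hy))⟩
  obtain ⟨a1, a2⟩ := n a z hA hz
  obtain ⟨a3, a4⟩ := n a z⁻¹ hA hzi
  obtain ⟨b1, b2⟩ := n b z hB hz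
  obtain ⟨b3, b4⟩ := n b z⁻¹ hB hzi
  obtain ⟨c1, c2⟩ := n c z hC hz
  obtain ⟨c3, c4⟩ := n c z⁻¹ hC hzi
  obtain ⟨d1, d2⟩ := n d z hD hz
  obtain ⟨d3, d4⟩ := n d z⁻¹ hD hzi
  unfold awH AWw
  rw [inv_inv, qpi_succ hq (z ^ 2), qpi_succ hq (z⁻¹ ^ 2), qpi_succ hq (a * z),
    qpi_succ hq (a * z⁻¹), qpi_succ hq (b * z), qpi_succ hq (b * z⁻¹), qpi_succ hq (c * z),
    qpi_succ hq (c * z⁻¹), qpi_succ hq (d * z), qpi_succ hq (d * z⁻¹)]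
  generalize qpi q (q * (a * z)) = A1 at *
  generalize qpi q (q * (a * z⁻¹)) = A2 at *
  generalize qpi q (q * (b * z)) = B1 at *
  generalize qpi q (q * (b * z⁻¹)) = B2 at *
  generalize qpi q (q * (c * z)) = C1 at *
  generalize qpi q (q * (c * z⁻¹)) = C2 at *
  generalize qpi q (q * (d * z)) = D1 at *
  generalize qpi q (q * (d * z⁻¹)) = D2 at *
  generalize qpi q (q * z ^ 2) = N1
  generalize qpi q (q * z⁻¹ ^ 2) = N2
  -- After removing the common infinite products a rational identity in `z` remains.
  have key : (1 - z⁻¹ ^ 2) * ((1 - a * z) * (1 - b * z) * (1 - c * z) * (1 - d * z)) * z⁻¹ +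
      (1 - z ^ 2) * ((1 - a * z⁻¹) * (1 - b * z⁻¹) * (1 - c * z⁻¹) * (1 - d * z⁻¹)) * z =
      ((1 - a * b * c * d) * (z + z⁻¹) -
        (a + b + c + d - (a * b * c + a * b * d + a * c * d + b * c * d))) *
        ((1 - z ^ 2) * (1 - z⁻¹ ^ 2)) := by
    field_simp
    ring
  trans (N1 * N2 / (A1 * A2 * B1 * B2 * C1 * C2 * D1 * D2)) *
    ((1 - z⁻¹ ^ 2) * ((1 - a * z) * (1 - b * z) * (1 - c * z) * (1 - d * z)) * z⁻¹ +
      (1 - z ^ 2) * ((1 - a * z⁻¹) * (1 - b * z⁻¹) * (1 - c * z⁻¹) * (1 - d * z⁻¹)) * z) /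
    ((1 - a * z) * (1 - b * z) * (1 - c * z) * (1 - d * z) *
      ((1 - a * z⁻¹) * (1 - b * z⁻¹) * (1 - c * z⁻¹) * (1 - d * z⁻¹)))
  · generalize hP1 : 1 - a * z = P1 at *
    generalize hP2 : 1 - a * z⁻¹ = P2 at *
    generalize hP3 : 1 - b * z = P3 at *
    generalize hP4 : 1 - b * z⁻¹ = P4 at *
    generalize hP5 : 1 - c * z = P5 at *
    generalize hP6 : 1 - c * z⁻¹ = P6 at *
    generalize hP7 : 1 - d * z = P7 at *
    generalize hP8 : 1 - d * z⁻¹ = P8 at *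
    field_simp
  · rw [key]
    generalize hP1 : 1 - a * z = P1 at *
    generalize hP2 : 1 - a * z⁻¹ = P2 at *
    generalize hP3 : 1 - b * z = P3 at *
    generalize hP4 : 1 - b * z⁻¹ = P4 at *
    generalize hP5 : 1 - c * z = P5 at *
    generalize hP6 : 1 - c * z⁻¹ = P6 at *
    generalize hP7 : 1 - d * z = P7 at *
    generalize hP8 : 1 - d * z⁻¹ = P8 at *
    generalize 1 - z⁻¹ ^ 2 = Q1 at *
    field_simp

/-- `H` is odd under the reflection `z ↦ 1/(qz)` of the circle `|z| = q^{-1/2}`. -/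
lemma awH_refl {q s a b c d u : ℂ} (hq : ‖q‖ < 1) (hs : s ^ 2 = q) (hs0 : s ≠ 0) (hu : u ≠ 0) :
    awH q a b c d (s⁻¹ * u⁻¹) = - awH q a b c d (s⁻¹ * u) := by
  have e1 : q * (s⁻¹ * u⁻¹) ^ 2 = u⁻¹ ^ 2 := by
    rw [← hs]
    field_simp
  have e2 : q * (s⁻¹ * u) ^ 2 = u ^ 2 := by
    rw [← hs]
    field_simp
  have e3 : (s⁻¹ * u⁻¹)⁻¹ = s * u := by simp [mul_comm]
  have e4 : (s⁻¹ * u)⁻¹ = s * u⁻¹ := by simp [mul_comm]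
  have e5 : ∀ t, q * (t * (s⁻¹ * u⁻¹)) = t * (s * u⁻¹) := fun t => by
    rw [← hs]
    field_simp
  have e6 : ∀ t, q * (t * (s⁻¹ * u)) = t * (s * u) := fun t => by
    rw [← hs]
    field_simp
  have e7 : (s * u) ^ 2 = q * u ^ 2 := by
    rw [← hs]
    ring
  have e8 : (s * u⁻¹) ^ 2 = q * u⁻¹ ^ 2 := by
    rw [← hs]
    ring
  unfold awH
  rw [e1, e2, e3, e4, e7, e8]
  simp only [e5, e6]
  rw [qpi_succ hq (u ^ 2), qpi_succ hq (u⁻¹ ^ 2)]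
  generalize qpi q (q * u ^ 2) = N1
  generalize qpi q (q * u⁻¹ ^ 2) = N2
  have hD : ∀ D : ℂ, (1 - u⁻¹ ^ 2) * N2 * (N1) / (s⁻¹ * u⁻¹ * D) =
      - ((1 - u ^ 2) * N1 * N2 / (s⁻¹ * u * D)) := by
    intro D
    rcases eq_or_ne D 0 with rfl | hD
    · simp
    · field_simp
      ring
  rw [hD]
  congr 3
  ring

lemma awH_differentiableAt {q a b c d z : ℂ} (hq : ‖q‖ < 1) (hA : ‖a‖ < 1) (hB : ‖b‖ < 1)
    (hC : ‖c‖ < 1) (hD : ‖d‖ < 1) (hz : 1 ≤ ‖z‖) (hqz : ‖q * z‖ < 1) :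
    DifferentiableAt ℂ (awH q a b c d) z := by
  have hz0 : z ≠ 0 := by
    rintro rfl
    simp at hz
    linarith
  have hp := qpi_differentiable hq
  have n1 : ∀ t : ℂ, ‖t‖ < 1 → qpi q (q * (t * z)) ≠ 0 := fun t ht => by
    refine qpi_ne_zero hq ?_
    rw [mul_left_comm]
    exact norm_mul_lt_one ht hqz
  have n2 : ∀ t : ℂ, ‖t‖ < 1 → qpi q (t * z⁻¹) ≠ 0 := fun t ht => by
    refine qpi_ne_zero hq ?_
    rw [norm_mul, norm_inv]
    exact mul_lt_one_of_nonneg_of_lt_one_left (norm_nonneg _) ht (inv_le_one_of_one_le₀ hz)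
  have hi : DifferentiableAt ℂ (fun z : ℂ => z⁻¹) z := differentiableAt_inv hz0
  have hm : ∀ f : ℂ → ℂ, DifferentiableAt ℂ f z →
      DifferentiableAt ℂ (fun z => qpi q (f z)) z := fun f hf => hp.differentiableAt.comp z hf
  unfold awH
  refine DifferentiableAt.fun_div ((hm _ (by fun_prop)).fun_mul (hm _ (by fun_prop)))
    (differentiableAt_fun_id.fun_mul ?_) ?_
  · repeat' first | exact hm _ (by fun_prop) | refine DifferentiableAt.fun_mul ?_ ?_
  · simp only [ne_eq, mul_eq_zero, not_or]
    exact ⟨hz0, ⟨⟨⟨⟨⟨⟨n1 _ hA, n2 _ hA⟩, n1 _ hB⟩, n2 _ hB⟩, n1 _ hC⟩, n2 _ hC⟩, n1 _ hD⟩, n2 _ hD⟩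

lemma exp_reflect (θ : ℝ) :
    Complex.exp (((2 * Real.pi - θ : ℝ) : ℂ) * Complex.I) =
      (Complex.exp ((θ : ℂ) * Complex.I))⁻¹ := by
  rw [← Complex.exp_neg]
  push_cast
  rw [sub_mul, Complex.exp_sub, Complex.exp_two_pi_mul_I, Complex.exp_neg, one_div]

lemma integral_circle_inv (f : ℂ → ℂ) :
    ∫ θ in (0 : ℝ)..2 * Real.pi, f (Complex.exp ((θ : ℂ) * Complex.I))⁻¹ =
      ∫ θ in (0 : ℝ)..2 * Real.pi, f (Complex.exp ((θ : ℂ) * Complex.I)) := by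
  have := intervalIntegral.integral_comp_sub_left (a := 0) (b := 2 * Real.pi)
    (fun θ : ℝ => f (Complex.exp ((θ : ℂ) * Complex.I))) (2 * Real.pi)
  simp only [exp_reflect, sub_self, sub_zero] at this
  exact this

/-- The integral of `H` over the unit circle vanishes: the circle can be moved to
`|z| = q^{-1/2}` inside the domain of holomorphy, and there `H` is odd. -/
lemma awH_integral {q : ℝ} (hq0 : 0 < q) (hq1 : q < 1) {a b c d : ℂ}
    (hA : ‖a‖ < 1) (hB : ‖b‖ < 1) (hC : ‖c‖ < 1) (hD : ‖d‖ < 1) :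
    ∫ θ in (0 : ℝ)..2 * Real.pi, awH q a b c d (Complex.exp ((θ : ℂ) * Complex.I)) = 0 := by
  have hq : ‖(q : ℂ)‖ < 1 := by rwa [Complex.norm_real, Real.norm_of_nonneg hq0.le]
  set s := Real.sqrt q with hs
  have hs0 : 0 < s := Real.sqrt_pos.2 hq0
  have hs2 : s ^ 2 = q := Real.sq_sqrt hq0.le
  have hs1 : s < 1 := by nlinarith
  have hsC : (s : ℂ) ^ 2 = q := by exact_mod_cast hs2
  have hdiff : ∀ z ∈ Metric.closedBall (0 : ℂ) s⁻¹ \ Metric.ball 0 1,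
      DifferentiableAt ℂ (awH q a b c d) z := by
    rintro z ⟨h1, h2⟩
    rw [Metric.mem_closedBall, dist_zero_right] at h1
    rw [Metric.mem_ball, dist_zero_right, not_lt] at h2
    refine awH_differentiableAt hq hA hB hC hD h2 ?_
    rw [norm_mul, Complex.norm_real, Real.norm_of_nonneg hq0.le, ← hs2]
    calc s ^ 2 * ‖z‖ ≤ s ^ 2 * s⁻¹ := by gcongr
      _ = s := by field_simp
      _ < 1 := hs1
  have hC := Complex.circleIntegral_sub_center_inv_smul_eq_of_differentiable_on_annulus_off_countable
    (c := 0) (r := 1) (R := s⁻¹) one_pos (one_le_inv_iff₀.2 ⟨hs0, hs1.le⟩)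
    (f := awH q a b c d) Set.countable_empty
    (fun z hz => (hdiff z hz).continuousAt.continuousWithinAt)
    (fun z hz => hdiff z ⟨Metric.ball_subset_closedBall hz.1.1,
      fun h => hz.1.2 (Metric.ball_subset_closedBall h)⟩)
  have hcirc : ∀ R : ℝ, R ≠ 0 → (∮ z in C(0, R), (z - 0)⁻¹ • awH q a b c d z) =
      Complex.I * ∫ θ in (0 : ℝ)..2 * Real.pi,
        awH q a b c d (R * Complex.exp ((θ : ℂ) * Complex.I)) := by
    intro R hR
    rw [circleIntegral, ← intervalIntegral.integral_const_mul]
    refine intervalIntegral.integral_congr fun θ _ => ?_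
    simp only [deriv_circleMap, circleMap, zero_add, sub_zero, smul_eq_mul]
    have := Complex.exp_ne_zero ((θ : ℂ) * Complex.I)
    have hR' : (R : ℂ) ≠ 0 := by exact_mod_cast hR
    field_simp
  rw [hcirc _ (inv_ne_zero hs0.ne'), hcirc 1 one_ne_zero] at hC
  have hE := mul_left_cancel₀ Complex.I_ne_zero hC
  simp only [Complex.ofReal_one, one_mul] at hE
  rw [← hE]
  have h1 := integral_circle_inv (fun z => awH q a b c d (((s⁻¹ : ℝ) : ℂ) * z))
  have h2 : ∀ θ : ℝ, awH q a b c d (((s⁻¹ : ℝ) : ℂ) * (Complex.exp ((θ : ℂ) * Complex.I))⁻¹) =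
      - awH q a b c d (((s⁻¹ : ℝ) : ℂ) * (Complex.exp ((θ : ℂ) * Complex.I))) := fun θ => by
    rw [Complex.ofReal_inv]
    exact awH_refl hq hsC (by exact_mod_cast hs0.ne') (Complex.exp_ne_zero _)
  simp only [h2, intervalIntegral.integral_neg] at h1
  exact self_eq_neg.1 h1.symm

lemma AWw_inv (q a b c d z : ℂ) : AWw q a b c d z⁻¹ = AWw q a b c d z := by
  unfold AWw
  rw [inv_inv]
  congr 1 <;> ring

lemma integral_symm {f : ℝ → ℂ} (hf : Continuous f) (hs : ∀ θ, f (2 * Real.pi - θ) = f θ) :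
    ∫ θ in (0 : ℝ)..2 * Real.pi, f θ = 2 * ∫ θ in (0 : ℝ)..Real.pi, f θ := by
  rw [← intervalIntegral.integral_add_adjacent_intervals (hf.intervalIntegrable 0 Real.pi)
    (hf.intervalIntegrable Real.pi (2 * Real.pi))]
  have := intervalIntegral.integral_comp_sub_left (a := 0) (b := Real.pi) f (2 * Real.pi)
  simp only [hs, sub_zero] at this
  rw [this, two_mul (∫ θ in _.._, _)]
  ring_nf

lemma norm_expI (θ : ℝ) : ‖Complex.exp ((θ : ℂ) * Complex.I)‖ = 1 :=
  Complex.norm_exp_ofReal_mul_I θ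

/-- The first moment of the weight, from `∫ H = 0` and the symmetrization of `H`. -/
lemma awI_moment {q : ℝ} (hq0 : 0 < q) (hq1 : q < 1) {a b c d : ℂ}
    (hA : ‖a‖ < 1) (hB : ‖b‖ < 1) (hC : ‖c‖ < 1) (hD : ‖d‖ < 1) :
    ∫ θ in (0 : ℝ)..Real.pi,
      ((1 - a * b * c * d) *
          (Complex.exp ((θ : ℂ) * Complex.I) + (Complex.exp ((θ : ℂ) * Complex.I))⁻¹) -
        (a + b + c + d - (a * b * c + a * b * d + a * c * d + b * c * d))) *
        AWw q a b c d (Complex.exp ((θ : ℂ) * Complex.I)) = 0 := by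
  have hq : ‖(q : ℂ)‖ < 1 := by rwa [Complex.norm_real, Real.norm_of_nonneg hq0.le]
  have hexp : Continuous fun θ : ℝ => Complex.exp ((θ : ℂ) * Complex.I) := by fun_prop
  have hexpi : Continuous fun θ : ℝ => (Complex.exp ((θ : ℂ) * Complex.I))⁻¹ :=
    hexp.inv₀ fun _ => Complex.exp_ne_zero _
  have hw : Continuous fun θ : ℝ => AWw q a b c d (Complex.exp ((θ : ℂ) * Complex.I)) :=
    AWw_continuous hq continuous_const continuous_const continuous_const continuous_const hexp
      (fun _ => hA) (fun _ => hB) (fun _ => hC) (fun _ => hD) norm_expI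
  have hd : ∀ z : ℂ, ‖z‖ = 1 → ContinuousAt (awH q a b c d) z := fun z hz =>
    (awH_differentiableAt hq hA hB hC hD hz.ge (norm_mul_lt_one' hq hz)).continuousAt
  have hH1 : Continuous fun θ : ℝ => awH q a b c d (Complex.exp ((θ : ℂ) * Complex.I)) :=
    continuous_iff_continuousAt.2 fun θ =>
      ContinuousAt.comp (f := fun θ : ℝ => Complex.exp ((θ : ℂ) * Complex.I))
        (hd _ (norm_expI θ)) hexp.continuousAt
  have hH2 : Continuous fun θ : ℝ => awH q a b c d (Complex.exp ((θ : ℂ) * Complex.I))⁻¹ :=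
    continuous_iff_continuousAt.2 fun θ =>
      ContinuousAt.comp (f := fun θ : ℝ => (Complex.exp ((θ : ℂ) * Complex.I))⁻¹)
        (hd _ (norm_inv_eq_one (norm_expI θ))) hexpi.continuousAt
  have h0 := awH_integral hq0 hq1 hA hB hC hD
  have h1 := integral_circle_inv (awH q a b c d)
  have h2 := intervalIntegral.integral_add (hH1.intervalIntegrable 0 (2 * Real.pi))
    (hH2.intervalIntegrable 0 (2 * Real.pi)) (μ := MeasureTheory.volume)
  rw [h1, h0, add_zero] at h2
  simp only [awH_add hq hA hB hC hD (norm_expI _)] at h2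
  rw [integral_symm (by fun_prop)] at h2
  · exact (mul_eq_zero.1 h2).resolve_left two_ne_zero
  · intro θ
    rw [exp_reflect, AWw_inv, inv_inv, add_comm (Complex.exp _)⁻¹]

/-- `w_{qa,b,c,d}(z) = (1-az)(1-a/z) w_{a,b,c,d}(z)`. -/
lemma AWw_shift {q a b c d z : ℂ} (hq : ‖q‖ < 1) (hA : ‖a‖ < 1) (hz : ‖z‖ = 1) :
    AWw q (a * q) b c d z = (1 - a * z) * (1 - a * z⁻¹) * AWw q a b c d z := by
  have h1 := one_sub_ne_zero (norm_mul_lt_one' hA hz)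
  have h2 := one_sub_ne_zero (norm_mul_lt_one' hA (norm_inv_eq_one hz))
  unfold AWw
  rw [qpi_succ hq (a * z), qpi_succ hq (a * z⁻¹), show a * q * z = q * (a * z) by ring,
    show a * q * z⁻¹ = q * (a * z⁻¹) by ring]
  generalize 1 - a * z = P1 at *
  generalize 1 - a * z⁻¹ = P2 at *
  rw [show P1 * qpi q (q * (a * z)) * (P2 * qpi q (q * (a * z⁻¹))) * qpi q (b * z) *
      qpi q (b * z⁻¹) * qpi q (c * z) * qpi q (c * z⁻¹) * qpi q (d * z) * qpi q (d * z⁻¹) =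
      (P1 * P2) * (qpi q (q * (a * z)) * qpi q (q * (a * z⁻¹)) * qpi q (b * z) *
      qpi q (b * z⁻¹) * qpi q (c * z) * qpi q (c * z⁻¹) * qpi q (d * z) * qpi q (d * z⁻¹)) by
    ring, ← mul_div_assoc, mul_div_mul_left _ _ (mul_ne_zero h1 h2)]

/-- The functional equation under `a ↦ aq`. Since `(1-az)(1-a/z)` has degree one in `z + 1/z`, it is
a consequence of the first moment. -/
lemma awI_shift {q : ℝ} (hq0 : 0 < q) (hq1 : q < 1) {a b c d : ℂ}
    (hA : ‖a‖ < 1) (hB : ‖b‖ < 1) (hC : ‖c‖ < 1) (hD : ‖d‖ < 1) :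
    (1 - a * b * c * d) * awI q (a * q) b c d =
      (1 - a * b) * (1 - a * c) * (1 - a * d) * awI q a b c d := by
  have hq : ‖(q : ℂ)‖ < 1 := by rwa [Complex.norm_real, Real.norm_of_nonneg hq0.le]
  have hexp : Continuous fun θ : ℝ => Complex.exp ((θ : ℂ) * Complex.I) := by fun_prop
  have hw : ∀ a : ℂ, ‖a‖ < 1 →
      Continuous fun θ : ℝ => AWw q a b c d (Complex.exp ((θ : ℂ) * Complex.I)) := fun a hA =>
    AWw_continuous hq continuous_const continuous_const continuous_const continuous_const hexp
      (fun _ => hA) (fun _ => hB) (fun _ => hC) (fun _ => hD) norm_expI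
  have hm := awI_moment hq0 hq1 hA hB hC hD
  rw [← sub_eq_zero, awI, awI, ← intervalIntegral.integral_const_mul,
    ← intervalIntegral.integral_const_mul, ← intervalIntegral.integral_sub
      (((hw _ (norm_mul_lt_one hA hq)).const_mul _).intervalIntegrable _ _)
      (((hw _ hA).const_mul _).intervalIntegrable _ _)]
  rw [← mul_zero (-a), ← hm, ← intervalIntegral.integral_const_mul]
  refine intervalIntegral.integral_congr fun θ _ => ?_
  rw [AWw_shift hq hA (norm_expI θ)]
  have := Complex.exp_ne_zero ((θ : ℂ) * Complex.I)
  field_simp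
  ring

/-! ### Evaluation of the Askey-Wilson integral -/

lemma AWw_swap12 (q a b c d z : ℂ) : AWw q a b c d z = AWw q b a c d z := by
  unfold AWw
  congr 1
  ring

lemma awI_swap12 (q a b c d : ℂ) : awI q a b c d = awI q b a c d := by
  simp only [awI, AWw_swap12 q a b c d]

lemma awI_swap13 (q a b c d : ℂ) : awI q a b c d = awI q c b a d := by
  unfold awI AWw
  congr 1
  funext θ
  congr 1
  ring

lemma awI_swap14 (q a b c d : ℂ) : awI q a b c d = awI q d b c a := by
  unfold awI AWw
  congr 1
  funext θ
  congr 1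
  ring

/-- The Askey-Wilson integral divided by its dependence on `a,b,c,d` in the closed form; it
turns out to be constant. -/
def awF (q a b c d : ℂ) : ℂ :=
  awI q a b c d * (qpi q (a * b) * qpi q (a * c) * qpi q (a * d) *
    qpi q (b * c) * qpi q (b * d) * qpi q (c * d)) / qpi q (a * b * c * d)

lemma awF_swap12 (q a b c d : ℂ) : awF q a b c d = awF q b a c d := by
  unfold awF
  rw [awI_swap12]
  ring_nf

lemma awF_swap13 (q a b c d : ℂ) : awF q a b c d = awF q c b a d := by
  unfold awF
  rw [awI_swap13]
  ring_nf

lemma awF_swap14 (q a b c d : ℂ) : awF q a b c d = awF q d b c a := by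
  unfold awF
  rw [awI_swap14]
  ring_nf

lemma norm_ofReal_lt {q : ℝ} (hq0 : 0 < q) (hq1 : q < 1) : ‖(q : ℂ)‖ < 1 := by
  rwa [Complex.norm_real, Real.norm_of_nonneg hq0.le]

lemma awF_shift {q : ℝ} (hq0 : 0 < q) (hq1 : q < 1) {a b c d : ℂ}
    (hA : ‖a‖ < 1) (hB : ‖b‖ < 1) (hC : ‖c‖ < 1) (hD : ‖d‖ < 1) :
    awF q (a * q) b c d = awF q a b c d := by
  have hq := norm_ofReal_lt hq0 hq1
  have h := awI_shift hq0 hq1 hA hB hC hD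
  have hE : ‖a * b * c * d‖ < 1 := norm_mul_lt_one (norm_mul_lt_one (norm_mul_lt_one hA hB) hC) hD
  have h1 := one_sub_ne_zero hE
  have h3 : awI q (a * q) b c d =
      (1 - a * b) * (1 - a * c) * (1 - a * d) * awI q a b c d / (1 - a * b * c * d) := by
    rw [eq_div_iff h1, ← h]
    ring
  unfold awF
  have e1 : a * q * b = q * (a * b) := by ring
  have e2 : a * q * c = q * (a * c) := by ring
  have e3 : a * q * d = q * (a * d) := by ring
  have e4 : q * (a * b) * c * d = q * (a * b * c * d) := by ring
  rw [h3, qpi_succ hq (a * b), qpi_succ hq (a * c), qpi_succ hq (a * d),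
    qpi_succ hq (a * b * c * d), e1, e2, e3, e4, div_mul_eq_mul_div, div_div]
  congr 1
  ring

lemma awF_continuous {q : ℝ} (hq0 : 0 < q) (hq1 : q < 1) {b c d : ℂ}
    (hB : ‖b‖ < 1) (hC : ‖c‖ < 1) (hD : ‖d‖ < 1) :
    Continuous fun a : {t : ℂ // ‖t‖ < 1} => awF q a b c d := by
  have hq := norm_ofReal_lt hq0 hq1
  have hp := qpi_continuous hq
  have hI : Continuous fun a : {t : ℂ // ‖t‖ < 1} => awI q a b c d := by
    refine intervalIntegral.continuous_parametric_intervalIntegral_of_continuous' ?_ _ _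
    exact AWw_continuous (X := {t : ℂ // ‖t‖ < 1} × ℝ) (a := fun x => (x.1 : ℂ))
      (z := fun x => Complex.exp ((x.2 : ℂ) * Complex.I)) hq
      (by fun_prop) continuous_const continuous_const
      continuous_const (by fun_prop) (fun x => x.1.2) (fun _ => hB) (fun _ => hC) (fun _ => hD)
      (fun x => norm_expI x.2)
  unfold awF
  refine Continuous.div (by fun_prop) (by fun_prop) fun x => qpi_ne_zero hq ?_
  exact norm_mul_lt_one (norm_mul_lt_one (norm_mul_lt_one x.2 hB) hC) hD

lemma awF_zero {q : ℝ} (hq0 : 0 < q) (hq1 : q < 1) {a b c d : ℂ}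
    (hA : ‖a‖ < 1) (hB : ‖b‖ < 1) (hC : ‖c‖ < 1) (hD : ‖d‖ < 1) :
    awF q a b c d = awF q 0 b c d := by
  have hq := norm_ofReal_lt hq0 hq1
  have h1 : ∀ k : ℕ, awF q (a * (q : ℂ) ^ k) b c d = awF q a b c d := by
    intro k
    induction k with
    | zero => simp
    | succ k ih =>
      rw [← ih, pow_succ, ← mul_assoc]
      exact awF_shift hq0 hq1 (norm_mul_pow_lt_one hq hA k) hB hC hD
  let u : ℕ → {t : ℂ // ‖t‖ < 1} := fun k => ⟨a * (q : ℂ) ^ k, norm_mul_pow_lt_one hq hA k⟩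
  have hu : Filter.Tendsto u Filter.atTop (nhds ⟨0, by simp⟩) := by
    rw [tendsto_subtype_rng]
    simpa using (tendsto_pow_atTop_nhds_zero_of_norm_lt_one hq).const_mul a
  have h2 := ((awF_continuous hq0 hq1 hB hC hD).tendsto _).comp hu
  exact tendsto_nhds_unique (tendsto_const_nhds.congr fun k => (h1 k).symm) h2

/-- Each parameter can be sent to `0` along `t q^k`, by shift invariance and continuity. -/
lemma awF_const {q : ℝ} (hq0 : 0 < q) (hq1 : q < 1) {a b c d : ℂ}
    (hA : ‖a‖ < 1) (hB : ‖b‖ < 1) (hC : ‖c‖ < 1) (hD : ‖d‖ < 1) :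
    awF q a b c d = awF q 0 0 0 0 := by
  have h0 : ‖(0 : ℂ)‖ < 1 := by simp
  rw [awF_zero hq0 hq1 hA hB hC hD, awF_swap12, awF_zero hq0 hq1 hB h0 hC hD, awF_swap13,
    awF_zero hq0 hq1 hC h0 h0 hD, awF_swap14, awF_zero hq0 hq1 hD h0 h0 h0]

/-- At `(s,-s,q,-q)` with `s² = q` the weight collapses to `(1-z²)(1-z^{-2})`. -/
lemma AWw_special {q s z : ℂ} (hq : ‖q‖ < 1) (hs1 : ‖s‖ < 1) (hs : s ^ 2 = q) (hz : ‖z‖ = 1) :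
    AWw q s (-s) q (-q) z = (1 - z ^ 2) * (1 - z⁻¹ ^ 2) := by
  have n : ∀ t y : ℂ, ‖t‖ < 1 → ‖y‖ = 1 → qpi q (t * y) ≠ 0 := fun t y ht hy =>
    qpi_ne_zero hq (norm_mul_lt_one' ht hy)
  have hzi := norm_inv_eq_one hz
  have hsn : ‖-s‖ < 1 := by rwa [norm_neg]
  have hqn : ‖-q‖ < 1 := by rwa [norm_neg]
  have := n s z hs1 hz
  have := n s z⁻¹ hs1 hzi
  have := n (-s) z hsn hz
  have := n (-s) z⁻¹ hsn hzi
  have := n q z hq hz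
  have := n q z⁻¹ hq hzi
  have := n (-q) z hqn hz
  have := n (-q) z⁻¹ hqn hzi
  unfold AWw
  rw [qpi_succ hq (z ^ 2), qpi_succ hq (z⁻¹ ^ 2), qpi_quad hq hs z, qpi_quad hq hs z⁻¹,
    div_eq_iff (by simp only [ne_eq, mul_eq_zero, not_or]; tauto)]
  ring

lemma awI_special {q s : ℂ} (hq : ‖q‖ < 1) (hs1 : ‖s‖ < 1) (hs : s ^ 2 = q) :
    awI q s (-s) q (-q) = 2 * Real.pi := by
  have h1 : ∀ c : ℂ, Continuous fun θ : ℝ => Complex.exp (c * θ) := fun c => by fun_prop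
  have hI2 : 2 * Complex.I ≠ 0 := mul_ne_zero two_ne_zero Complex.I_ne_zero
  have e1 : ∀ θ : ℝ, AWw q s (-s) q (-q) (Complex.exp ((θ : ℂ) * Complex.I)) =
      2 - Complex.exp (2 * Complex.I * θ) - Complex.exp (-(2 * Complex.I) * θ) := by
    intro θ
    rw [AWw_special hq hs1 hs (norm_expI θ), show 2 * Complex.I * (θ : ℂ) =
      θ * Complex.I + θ * Complex.I by ring, show -(2 * Complex.I) * (θ : ℂ) =
      -(θ * Complex.I + θ * Complex.I) by ring, Complex.exp_neg, Complex.exp_add]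
    have := Complex.exp_ne_zero ((θ : ℂ) * Complex.I)
    field_simp
    ring
  have hp : Complex.exp (2 * Complex.I * Real.pi) = 1 := by
    rw [show 2 * Complex.I * (Real.pi : ℂ) = 2 * Real.pi * Complex.I by ring,
      Complex.exp_two_pi_mul_I]
  have hp' : Complex.exp (-(2 * Complex.I) * Real.pi) = 1 := by
    rw [neg_mul, Complex.exp_neg, hp, inv_one]
  unfold awI
  simp only [e1]
  have h2 : Continuous fun θ : ℝ => 2 - Complex.exp (2 * Complex.I * θ) := by fun_prop
  rw [intervalIntegral.integral_sub (h2.intervalIntegrable _ _)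
    ((h1 _).intervalIntegrable _ _), intervalIntegral.integral_sub
    (continuous_const.intervalIntegrable _ _) ((h1 _).intervalIntegrable _ _),
    integral_exp_mul_complex hI2, integral_exp_mul_complex (neg_ne_zero.2 hI2), hp, hp']
  simp [mul_comm]

/-- The Askey-Wilson integral in closed form. Constancy of `awF` reduces it to the parameters
`(s,-s,q,-q)` with `s² = q`. -/
lemma awI_eval {q : ℝ} (hq0 : 0 < q) (hq1 : q < 1) {a b c d : ℂ}
    (hA : ‖a‖ < 1) (hB : ‖b‖ < 1) (hC : ‖c‖ < 1) (hD : ‖d‖ < 1) :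
    (2 * (Real.pi : ℂ))⁻¹ * awI q a b c d = qpi q (a * b * c * d) /
      (qpi q q * qpi q (a * b) * qpi q (a * c) * qpi q (a * d) *
        qpi q (b * c) * qpi q (b * d) * qpi q (c * d)) := by
  have hq := norm_ofReal_lt hq0 hq1
  obtain ⟨s, hs, hs1⟩ : ∃ s : ℂ, s ^ 2 = q ∧ ‖s‖ < 1 := by
    refine ⟨(Real.sqrt q : ℝ), by exact_mod_cast Real.sq_sqrt hq0.le, ?_⟩
    refine norm_ofReal_lt (Real.sqrt_pos.2 hq0) ?_
    rw [Real.sqrt_lt' one_pos]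
    simpa using hq1
  have hsn : ‖-s‖ < 1 := by rwa [norm_neg]
  have hqn : ‖-(q : ℂ)‖ < 1 := by rwa [norm_neg]
  have hF : awF q a b c d = awF q s (-s) q (-q) := by
    rw [awF_const hq0 hq1 hA hB hC hD, awF_const hq0 hq1 hs1 hsn hq hqn]
  have hq3 : ‖(q : ℂ) * (q * q)‖ < 1 := norm_mul_lt_one hq (norm_mul_lt_one hq hq)
  have hn3 := qpi_ne_zero hq hq3
  have hnq := qpi_ne_zero hq hq
  have hpi : (2 * (Real.pi : ℂ)) ≠ 0 := by simp [Real.pi_ne_zero]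
  -- The constant is `2π/(q;q)_∞`, by the Euler identity.
  have hK : awF q s (-s) q (-q) * qpi q q = 2 * Real.pi := by
    have t1 := qpi_mul_neg hq (s * q)
    have t2 := qpi_euler hq
    have t3 : qpi ((q : ℂ) ^ 2) q = (1 - q) * qpi ((q : ℂ) ^ 2) (q ^ 2 * q) :=
      qpi_succ (by rw [norm_pow]; exact pow_lt_one₀ (norm_nonneg _) hq two_ne_zero) _
    have t4 := qpi_succ hq (-q)
    have t5 : qpi q q = (1 - q) * ((1 - q * q) * qpi q (q * (q * q))) := by
      rw [← qpi_succ hq (q * q), ← qpi_succ hq q]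
    rw [show (s * (q : ℂ)) ^ 2 = q ^ 2 * q by rw [mul_pow, hs]; ring] at t1
    rw [t3, ← t1] at t2
    have hd : s * -s * q * -q = (q : ℂ) * (q * q) := by
      linear_combination ((q : ℂ) * q) * hs
    unfold awF
    rw [awI_special hq hs1 hs, hd, show s * -s = -(q : ℂ) by linear_combination -hs,
      show s * -(q : ℂ) = -(s * q) by ring, show -s * (q : ℂ) = -(s * q) by ring,
      show -s * -(q : ℂ) = s * q by ring, show (q : ℂ) * -q = q * (-q) by ring,
      div_mul_eq_mul_div, div_eq_iff hn3, t5]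
    linear_combination (2 * (Real.pi : ℂ) * qpi q (q * (q * q)) *
      (qpi q (-q) * ((1 - q) * (qpi q (s * q) * qpi q (-(s * q)))) + 1)) * t2 -
      (2 * (Real.pi : ℂ) * qpi q (-q) * (qpi q (s * q) * qpi q (-(s * q))) ^ 2 * (1 - q) ^ 2 *
        qpi q (q * (q * q))) * t4
  have n : ∀ {x y : ℂ}, ‖x‖ < 1 → ‖y‖ < 1 → qpi q (x * y) ≠ 0 := fun hx hy =>
    qpi_ne_zero hq (norm_mul_lt_one hx hy)
  have hE := n (norm_mul_lt_one (norm_mul_lt_one hA hB) hC) hD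
  have := n hA hB
  have := n hA hC
  have := n hA hD
  have := n hB hC
  have := n hB hD
  have := n hC hD
  rw [← hF, awF, div_mul_eq_mul_div, div_eq_iff hE] at hK
  rw [eq_div_iff (by simp only [ne_eq, mul_eq_zero, not_or]; tauto)]
  rw [inv_mul_eq_div, div_mul_eq_mul_div, div_eq_iff hpi]
  linear_combination hK

/-! ### Terminating q-sums -/

/-- The functional `f ↦ ∑_{k≤n} (q^{-n};q)_k q^k / (q;q)_k · f(q^k)`. -/
def qT (q : ℂ) (n : ℕ) (f : ℂ → ℂ) : ℂ :=
  ∑ k ∈ Finset.range (n + 1), qp q (q ^ n)⁻¹ k * q ^ k / qp q q k * f (q ^ k)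

lemma qp_zero (q x : ℂ) : qp q x 0 = 1 := by simp [qp]

lemma qp_succ (q x : ℂ) (k : ℕ) : qp q x (k + 1) = qp q x k * (1 - x * q ^ k) := by
  simp [qp, Finset.prod_range_succ]

lemma qp_succ' (q x : ℂ) (k : ℕ) : qp q x (k + 1) = (1 - x) * qp q (x * q) k := by
  simp only [qp, Finset.prod_range_succ', pow_zero, mul_one]
  rw [mul_comm]
  congr 1
  exact Finset.prod_congr rfl fun j _ => by ring

lemma qp_add (q x : ℂ) (m k : ℕ) : qp q x (m + k) = qp q x m * qp q (x * q ^ m) k := by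
  simp only [qp, Finset.prod_range_add]
  congr 1
  exact Finset.prod_congr rfl fun j _ => by ring

lemma qT_congr {q : ℂ} {n : ℕ} {f g : ℂ → ℂ} (h : ∀ k : ℕ, f (q ^ k) = g (q ^ k)) :
    qT q n f = qT q n g :=
  Finset.sum_congr rfl fun k _ => by rw [h]

lemma qT_sub (q : ℂ) (n : ℕ) (f g : ℂ → ℂ) :
    qT q n (fun x => f x - g x) = qT q n f - qT q n g := by
  simp only [qT, ← Finset.sum_sub_distrib]
  exact Finset.sum_congr rfl fun k _ => by ring

lemma qT_add (q : ℂ) (n : ℕ) (f g : ℂ → ℂ) :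
    qT q n (fun x => f x + g x) = qT q n f + qT q n g := by
  simp only [qT, ← Finset.sum_add_distrib]
  exact Finset.sum_congr rfl fun k _ => by ring

lemma qT_const_mul (q : ℂ) (n : ℕ) (r : ℂ) (f : ℂ → ℂ) :
    qT q n (fun x => r * f x) = r * qT q n f := by
  simp only [qT, Finset.mul_sum]
  exact Finset.sum_congr rfl fun k _ => by ring

/-- By recursion on `n`, `qT q n` is an `n`-fold q-difference evaluated at `1`. -/
lemma qT_succ {q : ℂ} (hq0 : q ≠ 0) (hq : ‖q‖ < 1) (n : ℕ) (f : ℂ → ℂ) :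
    qT q (n + 1) f = qT q n (fun x => (f x - f (q * x)) / x) := by
  have hrec : ∀ k : ℕ, qp q (q ^ (n + 1))⁻¹ (k + 1) * q ^ (k + 1) / qp q q (k + 1) =
      (qp q (q ^ n)⁻¹ (k + 1) * q ^ (k + 1) / qp q q (k + 1)) / q ^ (k + 1) -
        (qp q (q ^ n)⁻¹ k * q ^ k / qp q q k) / q ^ k := by
    intro k
    have h1 : (q ^ (n + 1))⁻¹ * q = (q ^ n)⁻¹ := by
      field_simp
      ring
    have h2 := qp_ne_zero hq hq k
    have h3 : 1 - q * q ^ k ≠ 0 := one_sub_ne_zero (norm_mul_pow_lt_one hq hq k)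
    rw [qp_succ', h1, qp_succ q (q ^ n)⁻¹, qp_succ q q]
    generalize qp q (q ^ n)⁻¹ k = P
    generalize qp q q k = R at *
    have h4 : 1 - q ^ (k + 1) ≠ 0 := by rwa [pow_succ']
    field_simp
    ring
  have hlast : qp q (q ^ n)⁻¹ (n + 1) = 0 := by
    rw [qp_succ, inv_mul_cancel₀ (pow_ne_zero _ hq0), sub_self, mul_zero]
  unfold qT
  rw [Finset.sum_range_succ' _ (n + 1)]
  have hS : ∑ k ∈ Finset.range (n + 1),
      qp q (q ^ n)⁻¹ k * q ^ k / qp q q k * ((f (q ^ k) - f (q * q ^ k)) / q ^ k) =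
      ∑ k ∈ Finset.range (n + 1 + 1), qp q (q ^ n)⁻¹ k * q ^ k / qp q q k / q ^ k * f (q ^ k) -
      ∑ k ∈ Finset.range (n + 1),
        qp q (q ^ n)⁻¹ k * q ^ k / qp q q k / q ^ k * f (q ^ (k + 1)) := by
    rw [Finset.sum_range_succ _ (n + 1), hlast, zero_mul, zero_div, zero_div, zero_mul, add_zero,
      ← Finset.sum_sub_distrib]
    refine Finset.sum_congr rfl fun k _ => ?_
    rw [pow_succ']
    ring
  rw [hS, Finset.sum_range_succ' _ (n + 1), add_sub_right_comm, ← Finset.sum_sub_distrib]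
  congr 1
  · refine Finset.sum_congr rfl fun k _ => ?_
    rw [hrec]
    ring
  · simp [qp_zero]

lemma qT_pow_eq_zero {q : ℂ} (hq0 : q ≠ 0) (hq : ‖q‖ < 1) (n i : ℕ) (hi : i < n) :
    qT q n (fun x => x ^ i) = 0 := by
  induction n generalizing i with
  | zero => omega
  | succ n ih =>
    rw [qT_succ hq0 hq]
    rcases i with _ | i
    · simp [qT]
    · rw [qT_congr (g := fun x => (1 - q ^ (i + 1)) * x ^ i), qT_const_mul, ih i (by omega),
        mul_zero]
      intro k
      field_simp
      ring

/-- `qT q n` annihilates polynomials of degree less than `n`. -/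
lemma qT_prod_eq_zero {q : ℂ} (hq0 : q ≠ 0) (hq : ‖q‖ < 1) (n : ℕ) (β : ℕ → ℂ) (m i : ℕ)
    (hi : i + m < n) : qT q n (fun x => x ^ i * ∏ j ∈ Finset.range m, (1 - β j * x)) = 0 := by
  induction m generalizing i with
  | zero => simpa using qT_pow_eq_zero hq0 hq n i (by omega)
  | succ m ih =>
    rw [qT_congr (g := fun x => x ^ i * ∏ j ∈ Finset.range m, (1 - β j * x) -
      β m * (x ^ (i + 1) * ∏ j ∈ Finset.range m, (1 - β j * x))), qT_sub, qT_const_mul,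
      ih i (by omega), ih (i + 1) (by omega), mul_zero, sub_zero]
    intro k
    rw [Finset.prod_range_succ]
    ring

lemma qT_pow_div {q : ℂ} (hq0 : q ≠ 0) (hq : ‖q‖ < 1) (n : ℕ) {y : ℂ} (hy : ‖y‖ < 1) :
    qT q n (fun x => x ^ n / (1 - y * x)) = qp q q n / qp q y (n + 1) := by
  induction n generalizing y with
  | zero => simp [qT, qp]
  | succ n ih =>
    have hyq : ‖y * q‖ < 1 := norm_mul_lt_one hy hq
    rw [qT_succ hq0 hq, qT_congr (g := fun x => x ^ n / (1 - y * x) -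
      q ^ (n + 1) * (x ^ n / (1 - y * q * x))), qT_sub, qT_const_mul, ih hy, ih hyq]
    · have h1 := qp_ne_zero hq hyq n
      have h2 := one_sub_ne_zero hy
      have h3 : 1 - y * q * q ^ n ≠ 0 := one_sub_ne_zero (norm_mul_pow_lt_one hq hyq n)
      rw [qp_succ' q y (n + 1), qp_succ' q y n, qp_succ q (y * q) n, qp_succ q q]
      generalize qp q (y * q) n = P at *
      field_simp
      ring
    · intro k
      have hk : q ^ k ≠ 0 := pow_ne_zero _ hq0
      have h2 : 1 - y * q ^ k ≠ 0 := one_sub_ne_zero (norm_mul_pow_lt_one hq hy k)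
      have h3 : 1 - y * q * q ^ k ≠ 0 := one_sub_ne_zero (norm_mul_pow_lt_one hq hyq k)
      have h4 : 1 - y * (q * q ^ k) ≠ 0 := by rwa [← mul_assoc]
      rw [mul_assoc y q]
      generalize q ^ k = x at *
      rw [sub_div, pow_succ x, mul_pow]
      field_simp
      ring

/-- The value of `qT q n` on a polynomial of degree `n` divided by `1 - yx`; a form of the
q-Pfaff-Saalschütz sum without denominators that could degenerate. -/
lemma qT_prod_div {q : ℂ} (hq0 : q ≠ 0) (hq : ‖q‖ < 1) (n : ℕ) (β : ℕ → ℂ) {y : ℂ}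
    (hy : ‖y‖ < 1) (m : ℕ) (hm : m ≤ n) :
    qT q n (fun x => x ^ (n - m) * (∏ j ∈ Finset.range m, (1 - β j * x)) / (1 - y * x)) =
      qp q q n * (∏ j ∈ Finset.range m, (y - β j)) / qp q y (n + 1) := by
  induction m with
  | zero => simpa using qT_pow_div hq0 hq n hy
  | succ m ih =>
    obtain ⟨i, rfl⟩ : ∃ i, n = m + 1 + i := ⟨n - (m + 1), by omega⟩
    have ih' := ih (by omega)
    have e1 : m + 1 + i - m = i + 1 := by omega
    have e2 : m + 1 + i - (m + 1) = i := by omega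
    rw [e1] at ih'
    rw [e2, qT_congr (g := fun x => (y - β m) *
      (x ^ (i + 1) * (∏ j ∈ Finset.range m, (1 - β j * x)) / (1 - y * x)) +
        x ^ i * ∏ j ∈ Finset.range m, (1 - β j * x)), qT_add, qT_const_mul, ih',
      qT_prod_eq_zero hq0 hq _ β m i (by omega), Finset.prod_range_succ]
    · ring
    · intro k
      have h2 : 1 - y * q ^ k ≠ 0 := one_sub_ne_zero (norm_mul_pow_lt_one hq hy k)
      rw [Finset.prod_range_succ, div_eq_iff h2, add_mul, ← mul_div_assoc, div_mul_cancel₀ _ h2]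
      ring

/-- The factors produced by the top coefficients combine to `(ab)^n (q,cd;q)_n`, when
`u = ab`, `v = cd` and `y = q^{n-1}abcd`. -/
lemma qp_inv_combine {q : ℂ} (hq0 : q ≠ 0) (n : ℕ) (u v : ℂ) (y : ℂ)
    (hy : q * y = q ^ n * (u * v)) :
    qp q (q ^ n)⁻¹ n * q ^ n * ∏ j ∈ Finset.range n, (y - u * q ^ j) =
      u ^ n * qp q q n * qp q v n := by
  have h1 : ∏ j ∈ Finset.range n, (y - u * q ^ j) =
      ∏ j ∈ Finset.range n, (y - u * q ^ (n - 1 - j)) :=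
    (Finset.prod_range_reflect (fun j => y - u * q ^ j) n).symm
  have h2 : qp q q n = ∏ j ∈ Finset.range n, (1 - q * q ^ (n - 1 - j)) :=
    (Finset.prod_range_reflect (fun j => 1 - q * q ^ j) n).symm
  have h3 : ∀ r : ℂ, r ^ n = ∏ j ∈ Finset.range n, r := fun r => by simp
  rw [h1, h2, h3 u, qp, qp]
  nth_rewrite 2 [h3 q]
  rw [← Finset.prod_mul_distrib, ← Finset.prod_mul_distrib, ← Finset.prod_mul_distrib,
    ← Finset.prod_mul_distrib]
  refine Finset.prod_congr rfl fun j hj => ?_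
  obtain ⟨i, rfl⟩ : ∃ i, n = j + i + 1 := ⟨n - 1 - j, by have := Finset.mem_range.1 hj; omega⟩
  have e1 : j + i + 1 - 1 - j = i := by omega
  rw [e1]
  have hy' : y = q ^ (j + i) * (u * v) := by
    apply mul_left_cancel₀ hq0
    rw [hy]
    ring
  rw [hy']
  field_simp
  ring

/-! ### Pairing an Askey-Wilson polynomial with the basis attached to `b` -/

/-- `φ_k(x;t) = ∏_{j<k} (1 - 2tq^j x + t²q^{2j})`, which is `(te^{iθ}, te^{-iθ};q)_k` for
`x = cos θ`. -/
def awphi (q t : ℂ) (k : ℕ) (x : ℂ) : ℂ :=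
  ∏ j ∈ Finset.range k, (1 - 2 * t * q ^ j * x + t ^ 2 * q ^ (2 * j))

lemma awphi_succ (q t : ℂ) (k : ℕ) (x : ℂ) :
    awphi q t (k + 1) x = awphi q t k x * (1 - 2 * t * q ^ k * x + t ^ 2 * q ^ (2 * k)) := by
  simp [awphi, Finset.prod_range_succ]

lemma awphi_continuous (q t : ℂ) (k : ℕ) : Continuous (awphi q t k) := by
  unfold awphi
  fun_prop

/-- `φ_k(cos θ;a) w_{a,b,c,d} = w_{aq^k,b,c,d}` on the unit circle. -/
lemma AWw_shift_pow {q a b c d : ℂ} (hq : ‖q‖ < 1) (hA : ‖a‖ < 1) (k : ℕ) (θ : ℝ) :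
    AWw q (a * q ^ k) b c d (Complex.exp ((θ : ℂ) * Complex.I)) =
      awphi q a k ((Real.cos θ : ℝ) : ℂ) *
        AWw q a b c d (Complex.exp ((θ : ℂ) * Complex.I)) := by
  induction k with
  | zero => simp [awphi]
  | succ k ih =>
    rw [pow_succ, ← mul_assoc, AWw_shift hq (norm_mul_pow_lt_one hq hA k) (norm_expI θ), ih,
      awphi_succ, Complex.ofReal_cos, Complex.cos, neg_mul, Complex.exp_neg]
    have := Complex.exp_ne_zero ((θ : ℂ) * Complex.I)
    field_simp
    ring

lemma awI_phi {q a b c d : ℂ} (hq : ‖q‖ < 1) (hA : ‖a‖ < 1) (hB : ‖b‖ < 1) (k j : ℕ) :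
    ∫ θ in (0 : ℝ)..Real.pi, awphi q a k ((Real.cos θ : ℝ) : ℂ) *
      awphi q b j ((Real.cos θ : ℝ) : ℂ) * AWw q a b c d (Complex.exp ((θ : ℂ) * Complex.I)) =
      awI q (a * q ^ k) (b * q ^ j) c d := by
  unfold awI
  refine intervalIntegral.integral_congr fun θ _ => ?_
  rw [AWw_shift_pow hq hA, AWw_swap12, AWw_swap12 q a, AWw_shift_pow hq hB]
  ring

lemma awI_shift_pow {q : ℝ} (hq0 : 0 < q) (hq1 : q < 1) {a b c d : ℂ}
    (hA : ‖a‖ < 1) (hB : ‖b‖ < 1) (hC : ‖c‖ < 1) (hD : ‖d‖ < 1) (k : ℕ) :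
    qp q (a * b * c * d) k * awI q (a * (q : ℂ) ^ k) b c d =
      qp q (a * b) k * qp q (a * c) k * qp q (a * d) k * awI q a b c d := by
  induction k with
  | zero => simp [qp]
  | succ k ih =>
    have h := awI_shift hq0 hq1 (norm_mul_pow_lt_one (norm_ofReal_lt hq0 hq1) hA k) hB hC hD
    rw [pow_succ, ← mul_assoc a]
    simp only [qp_succ]
    linear_combination qp q (a * b * c * d) k * h +
      (1 - a * b * (q : ℂ) ^ k) * (1 - a * c * (q : ℂ) ^ k) * (1 - a * d * (q : ℂ) ^ k) * ih

lemma awp_eq (q a b c d : ℂ) (n : ℕ) (x : ℂ) :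
    awp q a b c d n x = ∑ k ∈ Finset.range (n + 1),
      (a ^ (-(n : ℤ)) * (qp q (a * b) n * qp q (a * c) n * qp q (a * d) n) *
        (qp q (q ^ n)⁻¹ k * qp q (q ^ ((n : ℤ) - 1) * (a * b * c * d)) k * q ^ k /
        (qp q (a * b) k * qp q (a * c) k * qp q (a * d) k * qp q q k))) * awphi q a k x := by
  rw [awp, Finset.mul_sum]
  refine Finset.sum_congr rfl fun k _ => ?_
  rw [awphi]
  ring

lemma awp_continuous (q a b c d : ℂ) (n : ℕ) : Continuous (awp q a b c d n) := by
  have := awphi_continuous q a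
  simp only [funext (awp_eq q a b c d n)]
  fun_prop

lemma AWw_circle_continuous {q a b c d : ℂ} (hq : ‖q‖ < 1) (hA : ‖a‖ < 1) (hB : ‖b‖ < 1)
    (hC : ‖c‖ < 1) (hD : ‖d‖ < 1) :
    Continuous fun θ : ℝ => AWw q a b c d (Complex.exp ((θ : ℂ) * Complex.I)) :=
  AWw_continuous hq continuous_const continuous_const continuous_const continuous_const
    (by fun_prop) (fun _ => hA) (fun _ => hB) (fun _ => hC) (fun _ => hD) norm_expI

/-- The algebra behind one term of `awp_pair`. -/
lemma pair_algebra {A M N₁ N₂ N₃ N₄ N₅ P Y Z I J L : ℂ} (h₁ : N₁ ≠ 0) (h₂ : N₂ ≠ 0)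
    (h₃ : N₃ ≠ 0) (h₅ : N₅ ≠ 0) (h : N₅ * J = L * N₂ * N₃ * I) :
    A * M * (P * Y * Z / (N₁ * N₂ * N₃ * N₄)) * J =
      A * M * I * (P * Z / N₄ * (Y / N₅ * (L / N₁))) := by
  have hJ : J = L * N₂ * N₃ * I / N₅ := by
    rw [eq_div_iff h₅, mul_comm, h]
  rw [hJ]
  field_simp

/-- Termwise integration reduces the pairing of `p_n` with `φ_j(·;b)` to a terminating q-sum. -/
lemma awp_pair {q : ℝ} (hq0 : 0 < q) (hq1 : q < 1) {a b c d : ℂ}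
    (hA : ‖a‖ < 1) (hB : ‖b‖ < 1) (hC : ‖c‖ < 1) (hD : ‖d‖ < 1) (n j : ℕ) :
    ∫ θ in (0 : ℝ)..Real.pi, awp q a b c d n ((Real.cos θ : ℝ) : ℂ) *
      awphi q b j ((Real.cos θ : ℝ) : ℂ) * AWw q a b c d (Complex.exp ((θ : ℂ) * Complex.I)) =
    a ^ (-(n : ℤ)) * (qp q (a * b) n * qp q (a * c) n * qp q (a * d) n) *
      awI q a (b * (q : ℂ) ^ j) c d *
      ∑ k ∈ Finset.range (n + 1), qp q ((q : ℂ) ^ n)⁻¹ k * (q : ℂ) ^ k / qp q q k *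
        (qp q ((q : ℂ) ^ ((n : ℤ) - 1) * (a * b * c * d)) k /
          qp q (a * b * c * d * (q : ℂ) ^ j) k *
          (qp q (a * b * (q : ℂ) ^ j) k / qp q (a * b) k)) := by
  have hq := norm_ofReal_lt hq0 hq1
  have hw := AWw_circle_continuous hq hA hB hC hD
  have hphi := awphi_continuous q
  have hE : ‖a * b * c * d‖ < 1 := norm_mul_lt_one (norm_mul_lt_one (norm_mul_lt_one hA hB) hC) hD
  have hcos : Continuous fun θ : ℝ => ((Real.cos θ : ℝ) : ℂ) := by fun_prop
  simp only [awp_eq, Finset.sum_mul]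
  rw [intervalIntegral.integral_finsetSum, Finset.mul_sum]
  · refine Finset.sum_congr rfl fun k _ => ?_
    have h1 := awI_phi (c := c) (d := d) hq hA hB k j
    have h2 := awI_shift_pow hq0 hq1 hA (norm_mul_pow_lt_one hq hB j) hC hD k
    have n1 := qp_ne_zero hq (norm_mul_lt_one hA hB) k
    have n2 := qp_ne_zero hq (norm_mul_lt_one hA hC) k
    have n3 := qp_ne_zero hq (norm_mul_lt_one hA hD) k
    have n5 := qp_ne_zero hq (norm_mul_pow_lt_one hq hE j) k
    have e1 : a * (b * (q : ℂ) ^ j) * c * d = a * b * c * d * (q : ℂ) ^ j := by ring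
    have e2 : a * (b * (q : ℂ) ^ j) = a * b * (q : ℂ) ^ j := by ring
    rw [e1, e2] at h2
    rw [← pair_algebra n1 n2 n3 n5 h2, ← h1, ← intervalIntegral.integral_const_mul]
    exact intervalIntegral.integral_congr fun θ _ => by ring
  · intro k _
    refine Continuous.intervalIntegrable ?_ _ _
    have g1 := (hphi a k).comp hcos
    have g2 := (hphi b j).comp hcos
    exact ((continuous_const.mul g1).mul g2).mul hw

lemma qp_ratio {q x : ℂ} (hq : ‖q‖ < 1) (hx : ‖x‖ < 1) (j k : ℕ) :
    qp q (x * q ^ j) k / qp q x k = (qp q x j)⁻¹ * qp q (x * q ^ k) j := by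
  have h1 := qp_ne_zero hq hx k
  have h2 := qp_ne_zero hq hx j
  have h := qp_add q x j k
  rw [add_comm, qp_add] at h
  field_simp
  linear_combination -h

lemma qp_eq_prod (q x : ℂ) (j k : ℕ) :
    qp q (x * q ^ k) j = ∏ i ∈ Finset.range j, (1 - x * q ^ i * q ^ k) :=
  Finset.prod_congr rfl fun i _ => by ring

lemma zpow_succ_sub_one (q : ℂ) (n : ℕ) : q ^ (((n + 1 : ℕ) : ℤ) - 1) = q ^ n := by
  rw [Nat.cast_succ, add_sub_cancel_right, zpow_natCast]

/-- `p_n` is orthogonal to `φ_j(·;b)` for `j < n`. -/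
lemma awp_pair_lt {q : ℝ} (hq0 : 0 < q) (hq1 : q < 1) {a b c d : ℂ}
    (hA : ‖a‖ < 1) (hB : ‖b‖ < 1) (hC : ‖c‖ < 1) (hD : ‖d‖ < 1) (n j : ℕ) (hj : j < n) :
    ∫ θ in (0 : ℝ)..Real.pi, awp q a b c d n ((Real.cos θ : ℝ) : ℂ) *
      awphi q b j ((Real.cos θ : ℝ) : ℂ) *
      AWw q a b c d (Complex.exp ((θ : ℂ) * Complex.I)) = 0 := by
  have hq := norm_ofReal_lt hq0 hq1
  have hqC : (q : ℂ) ≠ 0 := by exact_mod_cast hq0.ne'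
  have hE : ‖a * b * c * d‖ < 1 := norm_mul_lt_one (norm_mul_lt_one (norm_mul_lt_one hA hB) hC) hD
  rw [awp_pair hq0 hq1 hA hB hC hD]
  obtain ⟨l, rfl⟩ : ∃ l, n = j + l + 1 := ⟨n - j - 1, by omega⟩
  set E := a * b * c * d with hEdef
  -- The summand is a polynomial of degree `n - 1` in `q^k`.
  let β : ℕ → ℂ := fun i => if i < j then a * b * (q : ℂ) ^ i else E * (q : ℂ) ^ i
  have h := qT_prod_eq_zero hqC hq (j + l + 1) β (j + l) 0 (by omega)
  apply mul_eq_zero_of_right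
  trans qT q (j + l + 1) (fun x => ((qp q (E * (q : ℂ) ^ j) l)⁻¹ * (qp q (a * b) j)⁻¹) *
    (x ^ 0 * ∏ i ∈ Finset.range (j + l), (1 - β i * x)))
  · refine Finset.sum_congr rfl fun k _ => ?_
    rw [zpow_succ_sub_one, qp_ratio hq (norm_mul_lt_one hA hB),
      show (q : ℂ) ^ (j + l) * E = E * (q : ℂ) ^ j * (q : ℂ) ^ l by ring,
      qp_ratio hq (norm_mul_pow_lt_one hq hE j), qp_eq_prod q (a * b) j k,
      qp_eq_prod q (E * (q : ℂ) ^ j) l k]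
    beta_reduce
    rw [Finset.prod_range_add]
    have e1 : ∏ i ∈ Finset.range j, (1 - β i * (q : ℂ) ^ k) =
        ∏ i ∈ Finset.range j, (1 - a * b * (q : ℂ) ^ i * (q : ℂ) ^ k) :=
      Finset.prod_congr rfl fun i hi => by simp [β, Finset.mem_range.1 hi]
    have e2 : ∏ i ∈ Finset.range l, (1 - β (j + i) * (q : ℂ) ^ k) =
        ∏ i ∈ Finset.range l, (1 - E * (q : ℂ) ^ j * (q : ℂ) ^ i * (q : ℂ) ^ k) :=
      Finset.prod_congr rfl fun i _ => by simp [β, pow_add, mul_assoc]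
    rw [e1, e2]
    ring
  · rw [qT_const_mul, h, mul_zero]

/-- The pairing of `p_{n+1}` with `φ_{n+1}(·;b)`. The q-sum now has the single denominator
`1 - y q^k`, where `y = q^n abcd`. -/
lemma awp_pair_eq {q : ℝ} (hq0 : 0 < q) (hq1 : q < 1) {a b c d : ℂ}
    (hA : ‖a‖ < 1) (hB : ‖b‖ < 1) (hC : ‖c‖ < 1) (hD : ‖d‖ < 1) (n : ℕ) {y : ℂ}
    (hy : y = (q : ℂ) ^ n * (a * b * c * d)) :
    ∫ θ in (0 : ℝ)..Real.pi, awp q a b c d (n + 1) ((Real.cos θ : ℝ) : ℂ) *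
      awphi q b (n + 1) ((Real.cos θ : ℝ) : ℂ) *
      AWw q a b c d (Complex.exp ((θ : ℂ) * Complex.I)) =
    a ^ (-((n + 1 : ℕ) : ℤ)) *
      (qp q (a * b) (n + 1) * qp q (a * c) (n + 1) * qp q (a * d) (n + 1)) *
      awI q a (b * (q : ℂ) ^ (n + 1)) c d * ((qp q (a * b) (n + 1))⁻¹ * (1 - y) *
      (qp q q (n + 1) * (∏ i ∈ Finset.range (n + 1), (y - a * b * (q : ℂ) ^ i)) /
        qp q y (n + 1 + 1))) := by
  have hq := norm_ofReal_lt hq0 hq1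
  have hqC : (q : ℂ) ≠ 0 := by exact_mod_cast hq0.ne'
  have hE : ‖a * b * c * d‖ < 1 := norm_mul_lt_one (norm_mul_lt_one (norm_mul_lt_one hA hB) hC) hD
  have hyn : ‖y‖ < 1 := by
    rw [hy, mul_comm]
    exact norm_mul_pow_lt_one hq hE n
  rw [awp_pair hq0 hq1 hA hB hC hD]
  have h := qT_prod_div hqC hq (n + 1) (fun i => a * b * (q : ℂ) ^ i) hyn (n + 1) le_rfl
  rw [← h, ← qT_const_mul]
  congr 1
  refine Finset.sum_congr rfl fun k _ => ?_
  have h3 : qp q y k / qp q (y * q) k = (1 - y) / (1 - y * (q : ℂ) ^ k) := by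
    rw [div_eq_div_iff (qp_ne_zero hq (norm_mul_lt_one hyn hq) k)
      (one_sub_ne_zero (norm_mul_pow_lt_one hq hyn k)), ← qp_succ, ← qp_succ']
  rw [zpow_succ_sub_one, qp_ratio hq (norm_mul_lt_one hA hB), ← hy,
    show a * b * c * d * (q : ℂ) ^ (n + 1) = y * q by rw [hy]; ring, h3,
    qp_eq_prod q (a * b) (n + 1) k]
  beta_reduce
  rw [Nat.sub_self, pow_zero, one_mul]
  ring

/-! ### Change of basis between the `φ_k(·;a)` and the `φ_j(·;b)` -/

/-- The coefficient of `φ_j(·;b)` in the expansion of `φ_k(·;a)`, for `b ≠ 0`. -/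
def awconn (q a b : ℂ) : ℕ → ℕ → ℂ
  | 0, j => if j = 0 then 1 else 0
  | k + 1, 0 => (1 + a ^ 2 * q ^ (2 * k) - a * q ^ k / b * (1 + b ^ 2)) * awconn q a b k 0
  | k + 1, j + 1 => a * q ^ k / (b * q ^ j) * awconn q a b k j +
      (1 + a ^ 2 * q ^ (2 * k) -
        a * q ^ k / (b * q ^ (j + 1)) * (1 + b ^ 2 * q ^ (2 * (j + 1)))) * awconn q a b k (j + 1)

lemma awconn_gt (q a b : ℂ) (k : ℕ) : ∀ j, k < j → awconn q a b k j = 0 := by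
  induction k with
  | zero =>
    intro j hj
    simp [awconn, hj.ne']
  | succ k ih =>
    intro j hj
    obtain ⟨j, rfl⟩ : ∃ i, j = i + 1 := ⟨j - 1, by omega⟩
    simp [awconn, ih j (by omega), ih (j + 1) (by omega)]

lemma awconn_self {q a b : ℂ} (hq0 : q ≠ 0) (k : ℕ) : awconn q a b k k = (a / b) ^ k := by
  induction k with
  | zero => simp [awconn]
  | succ k ih =>
    rw [awconn, awconn_gt q a b k (k + 1) (by omega), ih,
      mul_div_mul_right _ _ (pow_ne_zero k hq0)]
    ring

/-- `N` is any bound above `k`; the coefficients with index beyond `k` vanish. -/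
lemma awphi_expand {q a b : ℂ} (hq0 : q ≠ 0) (hb : b ≠ 0) (k : ℕ) (x : ℂ) :
    ∀ N, k < N → awphi q a k x = ∑ j ∈ Finset.range N, awconn q a b k j * awphi q b j x := by
  induction k with
  | zero =>
    intro N hN
    rw [Finset.sum_eq_single 0]
    · simp [awphi, awconn]
    · intro j _ hj
      simp [awconn, hj]
    · intro h
      simp at h
      omega
  | succ k ih =>
    intro N hN
    obtain ⟨N, rfl⟩ : ∃ M, N = M + 1 := ⟨N - 1, by omega⟩
    have hkN : k < N := by omega
    rw [awphi_succ, ih N hkN, Finset.sum_mul]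
    have hterm : ∀ j, awconn q a b k j * awphi q b j x *
        (1 - 2 * a * q ^ k * x + a ^ 2 * q ^ (2 * k)) =
        a * q ^ k / (b * q ^ j) * awconn q a b k j * awphi q b (j + 1) x +
        (1 + a ^ 2 * q ^ (2 * k) - a * q ^ k / (b * q ^ j) * (1 + b ^ 2 * q ^ (2 * j))) *
          awconn q a b k j * awphi q b j x := by
      intro j
      rw [awphi_succ]
      field_simp
      ring
    simp only [hterm]
    have hpad : ∑ j ∈ Finset.range N,
        (1 + a ^ 2 * q ^ (2 * k) - a * q ^ k / (b * q ^ j) * (1 + b ^ 2 * q ^ (2 * j))) *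
          awconn q a b k j * awphi q b j x = ∑ j ∈ Finset.range (N + 1),
        (1 + a ^ 2 * q ^ (2 * k) - a * q ^ k / (b * q ^ j) * (1 + b ^ 2 * q ^ (2 * j))) *
          awconn q a b k j * awphi q b j x := by
      rw [Finset.sum_range_succ, awconn_gt q a b k N hkN]
      ring
    rw [Finset.sum_add_distrib, hpad, Finset.sum_range_succ', Finset.sum_range_succ' _ N,
      ← add_assoc, ← Finset.sum_add_distrib]
    congr 1
    · refine Finset.sum_congr rfl fun j _ => ?_
      rw [awconn]
      ring
    · simp [awconn]

/-- `p_n` in the basis `φ_j(·;b)`, with its top coefficient. -/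
lemma awp_expand {q a b c d : ℂ} (hq0 : q ≠ 0) (hb : b ≠ 0) (n : ℕ) :
    ∃ C : ℕ → ℂ, C n = a ^ (-(n : ℤ)) * (qp q (a * b) n * qp q (a * c) n * qp q (a * d) n) *
        (qp q (q ^ n)⁻¹ n * qp q (q ^ ((n : ℤ) - 1) * (a * b * c * d)) n * q ^ n /
        (qp q (a * b) n * qp q (a * c) n * qp q (a * d) n * qp q q n)) * (a / b) ^ n ∧
      ∀ x, awp q a b c d n x = ∑ j ∈ Finset.range (n + 1), C j * awphi q b j x := by
  refine ⟨fun j => ∑ k ∈ Finset.range (n + 1),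
      (a ^ (-(n : ℤ)) * (qp q (a * b) n * qp q (a * c) n * qp q (a * d) n) *
        (qp q (q ^ n)⁻¹ k * qp q (q ^ ((n : ℤ) - 1) * (a * b * c * d)) k * q ^ k /
        (qp q (a * b) k * qp q (a * c) k * qp q (a * d) k * qp q q k))) * awconn q a b k j,
    ?_, fun x => ?_⟩
  · beta_reduce
    rw [Finset.sum_range_succ, awconn_self hq0, Finset.sum_eq_zero, zero_add]
    intro k hk
    rw [awconn_gt q a b k n (Finset.mem_range.1 hk), mul_zero]
  · rw [awp_eq]
    simp only [Finset.sum_mul]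
    rw [Finset.sum_comm]
    refine Finset.sum_congr rfl fun k hk => ?_
    rw [awphi_expand hq0 hb k x (n + 1) (Finset.mem_range.1 hk), Finset.mul_sum]
    exact Finset.sum_congr rfl fun j _ => by ring

/-! ### Orthogonality -/

/-- The weighted integral of `p_n p_m` over `[0,π]`. -/
def awInner (q a b c d : ℂ) (n m : ℕ) : ℂ :=
  ∫ θ in (0 : ℝ)..Real.pi, awp q a b c d n ((Real.cos θ : ℝ) : ℂ) *
    awp q a b c d m ((Real.cos θ : ℝ) : ℂ) * AWw q a b c d (Complex.exp ((θ : ℂ) * Complex.I))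

lemma awInner_comm (q a b c d : ℂ) (n m : ℕ) : awInner q a b c d n m = awInner q a b c d m n := by
  unfold awInner
  exact intervalIntegral.integral_congr fun θ _ => by ring

lemma awInner_expand {q : ℝ} (hq0 : 0 < q) (hq1 : q < 1) {a b c d : ℂ}
    (hA : ‖a‖ < 1) (hB : ‖b‖ < 1) (hC : ‖c‖ < 1) (hD : ‖d‖ < 1) (n m : ℕ) (C : ℕ → ℂ)
    (h : ∀ x, awp q a b c d m x = ∑ j ∈ Finset.range (m + 1), C j * awphi q b j x) :
    awInner q a b c d n m = ∑ j ∈ Finset.range (m + 1), C j *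
      ∫ θ in (0 : ℝ)..Real.pi, awp q a b c d n ((Real.cos θ : ℝ) : ℂ) *
        awphi q b j ((Real.cos θ : ℝ) : ℂ) *
        AWw q a b c d (Complex.exp ((θ : ℂ) * Complex.I)) := by
  have hw := AWw_circle_continuous (norm_ofReal_lt hq0 hq1) hA hB hC hD
  have hcos : Continuous fun θ : ℝ => ((Real.cos θ : ℝ) : ℂ) := by fun_prop
  have hp := (awp_continuous q a b c d n).comp hcos
  unfold awInner
  simp only [h, Finset.mul_sum, Finset.sum_mul]
  rw [intervalIntegral.integral_finsetSum]
  · refine Finset.sum_congr rfl fun j _ => ?_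
    rw [← intervalIntegral.integral_const_mul]
    exact intervalIntegral.integral_congr fun θ _ => by ring
  · intro j _
    refine Continuous.intervalIntegrable ?_ _ _
    have g := (awphi_continuous q b j).comp hcos
    exact (hp.mul (continuous_const.mul g)).mul hw

lemma awInner_lt {q : ℝ} (hq0 : 0 < q) (hq1 : q < 1) {a b c d : ℂ} (hb : b ≠ 0)
    (hA : ‖a‖ < 1) (hB : ‖b‖ < 1) (hC : ‖c‖ < 1) (hD : ‖d‖ < 1) {n m : ℕ} (hmn : m < n) :
    awInner q a b c d n m = 0 := by
  have hqC : (q : ℂ) ≠ 0 := by exact_mod_cast hq0.ne'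
  obtain ⟨C, -, hC'⟩ := awp_expand (a := a) (c := c) (d := d) hqC hb m
  rw [awInner_expand hq0 hq1 hA hB hC hD n m C hC']
  refine Finset.sum_eq_zero fun j hj => ?_
  have := Finset.mem_range.1 hj
  rw [awp_pair_lt hq0 hq1 hA hB hC hD n j (by omega), mul_zero]

/-- The algebra behind `awInner_self`: the top coefficient of `p_n` times its pairing with
`φ_n(·;b)`. -/
lemma diag_algebra {A D U M₁ M₂ M₃ B₁ B₂ Q V R X P Y t s E I J : ℂ} (hM₁ : M₁ ≠ 0)
    (hM₂ : M₂ ≠ 0) (hM₃ : M₃ ≠ 0) (hQ : Q ≠ 0) (hY : Y ≠ 0) (hs : s ≠ 0) (hE : E ≠ 0)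
    (h1 : A * A * D * U = 1) (h2 : R * X * P = U * Q * V) (h3 : E * J = M₁ * B₁ * B₂ * I) :
    A * (M₁ * M₂ * M₃) * (R * Y * X / (M₁ * M₂ * M₃ * Q)) * D *
      (A * (M₁ * M₂ * M₃) * J * (M₁⁻¹ * t * (Q * P / (Y * s)))) =
    I * (t * (Q * M₁ * M₂ * M₃ * B₁ * B₂ * V) / (s * E)) := by
  have hJ : J = M₁ * B₁ * B₂ * I / E := by
    rw [eq_div_iff hE, mul_comm, h3]
  have e : A * (M₁ * M₂ * M₃) * (R * Y * X / (M₁ * M₂ * M₃ * Q)) * D *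
      (A * (M₁ * M₂ * M₃) * J * (M₁⁻¹ * t * (Q * P / (Y * s)))) =
      A * A * D * (R * X * P) * (J * M₂ * M₃ * t / s) := by
    field_simp
  have e' : A * A * D * (U * Q * V) = Q * V := by linear_combination Q * V * h1
  rw [e, h2, e', hJ]
  field_simp

lemma awInner_self {q : ℝ} (hq0 : 0 < q) (hq1 : q < 1) {a b c d : ℂ} (ha : a ≠ 0) (hb : b ≠ 0)
    (hA : ‖a‖ < 1) (hB : ‖b‖ < 1) (hC : ‖c‖ < 1) (hD : ‖d‖ < 1) (n : ℕ) :
    (2 * (Real.pi : ℂ))⁻¹ * awInner q a b c d n n = awh q a b c d n := by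
  have hq := norm_ofReal_lt hq0 hq1
  have hqC : (q : ℂ) ≠ 0 := by exact_mod_cast hq0.ne'
  have hE : ‖a * b * c * d‖ < 1 := norm_mul_lt_one (norm_mul_lt_one (norm_mul_lt_one hA hB) hC) hD
  rcases n with _ | n
  · have h : awInner q a b c d 0 0 = awI q a b c d := by
      simp [awInner, awI, awp, qp]
    rw [h, awI_eval hq0 hq1 hA hB hC hD]
    simp [awh]
  obtain ⟨C, hCn, hC'⟩ := awp_expand (a := a) (c := c) (d := d) hqC hb (n + 1)
  rw [awInner_expand hq0 hq1 hA hB hC hD (n + 1) (n + 1) C hC', Finset.sum_range_succ,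
    Finset.sum_eq_zero, zero_add, hCn, awh, ← awI_eval hq0 hq1 hA hB hC hD, if_neg (by omega),
    mul_assoc _ (awI _ _ _ _ _)]
  swap
  · intro j hj
    rw [awp_pair_lt hq0 hq1 hA hB hC hD (n + 1) j (Finset.mem_range.1 hj), mul_zero]
  congr 1
  rw [awp_pair_eq hq0 hq1 hA hB hC hD n rfl, zpow_succ_sub_one, qp_succ q _ (n + 1)]
  have e1 : n + 1 - 1 = n := by omega
  have e2 : (q : ℂ) ^ (2 * (n + 1) - 1) * (a * b * c * d) =
      (q : ℂ) ^ n * (a * b * c * d) * (q : ℂ) ^ (n + 1) := by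
    have : 2 * (n + 1) - 1 = n + (n + 1) := by omega
    rw [this]
    ring
  rw [e1, e2]
  have hy : ‖(q : ℂ) ^ n * (a * b * c * d)‖ < 1 := by
    rw [mul_comm]
    exact norm_mul_pow_lt_one hq hE n
  refine diag_algebra (qp_ne_zero hq (norm_mul_lt_one hA hB) _)
    (qp_ne_zero hq (norm_mul_lt_one hA hC) _) (qp_ne_zero hq (norm_mul_lt_one hA hD) _)
    (qp_ne_zero hq hq _) (qp_ne_zero hq hy _)
    (one_sub_ne_zero (norm_mul_pow_lt_one hq hy _)) (qp_ne_zero hq hE _) ?_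
    (qp_inv_combine hqC (n + 1) (a * b) (c * d) _ (by ring)) ?_
  · rw [zpow_neg, zpow_natCast, div_pow, mul_pow]
    field_simp
  · have h := awI_shift_pow hq0 hq1 hB hA hC hD (n + 1)
    rw [mul_comm b a, awI_swap12 q _ a, awI_swap12 q b a] at h
    exact h

lemma awOrtho_of_ne {q : ℝ} (hq0 : 0 < q) (hq1 : q < 1) {a b c d : ℂ} (ha : a ≠ 0) (hb : b ≠ 0)
    (hA : ‖a‖ < 1) (hB : ‖b‖ < 1) (hC : ‖c‖ < 1) (hD : ‖d‖ < 1) (m n : ℕ) :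
    (2 * (Real.pi : ℂ))⁻¹ * awInner q a b c d n m = if m = n then awh q a b c d n else 0 := by
  rcases lt_trichotomy m n with h | rfl | h
  · rw [if_neg h.ne, awInner_lt hq0 hq1 hb hA hB hC hD h, mul_zero]
  · rw [if_pos rfl, awInner_self hq0 hq1 ha hb hA hB hC hD]
  · rw [if_neg h.ne', awInner_comm, awInner_lt hq0 hq1 hb hA hB hC hD h, mul_zero]

lemma qp_continuous (q : ℂ) (k : ℕ) : Continuous fun x => qp q x k := by
  unfold qp
  fun_prop

lemma awp_continuous_param {q a c d : ℂ} (hq : ‖q‖ < 1) (hA : ‖a‖ < 1) (hC : ‖c‖ < 1)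
    (hD : ‖d‖ < 1) (n : ℕ) :
    Continuous fun x : {t : ℂ // ‖t‖ < 1} × ℝ =>
      awp q a x.1 c d n ((Real.cos x.2 : ℝ) : ℂ) := by
  have hp := qp_continuous q
  have hcomp : ∀ (k : ℕ) (f : {t : ℂ // ‖t‖ < 1} × ℝ → ℂ), Continuous f →
      Continuous fun x => qp q (f x) k := fun k f hf => (hp k).comp hf
  unfold awp
  refine Continuous.mul ?_ (continuous_finsetSum _ fun k _ => Continuous.div ?_ ?_ fun x => ?_)
  · have := hcomp n (fun x => a * x.1) (by fun_prop)
    fun_prop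
  · have := hcomp k (fun x => q ^ ((n : ℤ) - 1) * (a * x.1 * c * d)) (by fun_prop)
    fun_prop
  · have := hcomp k (fun x => a * x.1) (by fun_prop)
    fun_prop
  · have h1 := qp_ne_zero hq (norm_mul_lt_one hA x.1.2) k
    have h2 := qp_ne_zero hq (norm_mul_lt_one hA hC) k
    have h3 := qp_ne_zero hq (norm_mul_lt_one hA hD) k
    have h4 := qp_ne_zero hq hq k
    exact mul_ne_zero (mul_ne_zero (mul_ne_zero h1 h2) h3) h4

lemma awInner_continuous {q a c d : ℂ} (hq : ‖q‖ < 1) (hA : ‖a‖ < 1) (hC : ‖c‖ < 1)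
    (hD : ‖d‖ < 1) (n m : ℕ) :
    Continuous fun b : {t : ℂ // ‖t‖ < 1} => awInner q a b c d n m := by
  refine intervalIntegral.continuous_parametric_intervalIntegral_of_continuous' ?_ _ _
  have hw := AWw_continuous (X := {t : ℂ // ‖t‖ < 1} × ℝ) (b := fun x => (x.1 : ℂ))
      (z := fun x => Complex.exp ((x.2 : ℂ) * Complex.I)) hq
      continuous_const (by fun_prop) continuous_const
      continuous_const (by fun_prop) (fun _ => hA) (fun x => x.1.2) (fun _ => hC) (fun _ => hD)
      (fun x => norm_expI x.2)
  exact ((awp_continuous_param hq hA hC hD n).mul (awp_continuous_param hq hA hC hD m)).mul hw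

lemma awh_continuous {q a c d : ℂ} (hq : ‖q‖ < 1) (hA : ‖a‖ < 1) (hC : ‖c‖ < 1)
    (hD : ‖d‖ < 1) (n : ℕ) :
    Continuous fun b : {t : ℂ // ‖t‖ < 1} => awh q a b c d n := by
  have hp := qp_continuous q
  have hpi := qpi_continuous hq
  have hcomp : ∀ (k : ℕ) (f : {t : ℂ // ‖t‖ < 1} → ℂ), Continuous f →
      Continuous fun x => qp q (f x) k := fun k f hf => (hp k).comp hf
  have hE : ∀ b : {t : ℂ // ‖t‖ < 1}, ‖a * b * c * d‖ < 1 := fun b =>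
    norm_mul_lt_one (norm_mul_lt_one (norm_mul_lt_one hA b.2) hC) hD
  have c1 := hcomp n (fun x => a * x) (by fun_prop)
  have c2 := hcomp n (fun x => (x : ℂ) * c) (by fun_prop)
  have c3 := hcomp n (fun x => (x : ℂ) * d) (by fun_prop)
  have c4 := hcomp n (fun x => a * x * c * d) (by fun_prop)
  unfold awh
  refine Continuous.mul (Continuous.div (by fun_prop) (by fun_prop) fun b => ?_) ?_
  · have h1 := qpi_ne_zero hq hq
    have h2 := qpi_ne_zero hq (norm_mul_lt_one hA b.2)
    have h3 := qpi_ne_zero hq (norm_mul_lt_one hA hC)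
    have h4 := qpi_ne_zero hq (norm_mul_lt_one hA hD)
    have h5 := qpi_ne_zero hq (norm_mul_lt_one b.2 hC)
    have h6 := qpi_ne_zero hq (norm_mul_lt_one b.2 hD)
    have h7 := qpi_ne_zero hq (norm_mul_lt_one hC hD)
    exact mul_ne_zero (mul_ne_zero (mul_ne_zero (mul_ne_zero (mul_ne_zero
      (mul_ne_zero h1 h2) h3) h4) h5) h6) h7
  · split_ifs
    · exact continuous_const
    · refine Continuous.div (by fun_prop) (by fun_prop) fun b => mul_ne_zero ?_ ?_
      · rw [mul_comm]
        exact one_sub_ne_zero (norm_mul_pow_lt_one hq (hE b) _)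
      · exact qp_ne_zero hq (hE b) n

/-- The case `b = 0`, where the `φ_j(·;b)` are not a basis, is a limit of the case `b ≠ 0`. -/
lemma awOrtho {q : ℝ} (hq0 : 0 < q) (hq1 : q < 1) {a b c d : ℂ} (ha : a ≠ 0)
    (hA : ‖a‖ < 1) (hB : ‖b‖ < 1) (hC : ‖c‖ < 1) (hD : ‖d‖ < 1) (m n : ℕ) :
    (2 * (Real.pi : ℂ))⁻¹ * awInner q a b c d n m = if m = n then awh q a b c d n else 0 := by
  by_cases hb : b = 0
  swap
  · exact awOrtho_of_ne hq0 hq1 ha hb hA hB hC hD m n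
  subst hb
  have hqC : (q : ℂ) ≠ 0 := by exact_mod_cast hq0.ne'
  have hq := norm_ofReal_lt hq0 hq1
  -- Both sides are continuous in `b`, and `b = 0` is the limit of `b = q^{k+1}`.
  let u : ℕ → {t : ℂ // ‖t‖ < 1} := fun k => ⟨(q : ℂ) * (q : ℂ) ^ k, norm_mul_pow_lt_one hq hq k⟩
  have hu : Filter.Tendsto u Filter.atTop (nhds ⟨0, by simp⟩) := by
    rw [tendsto_subtype_rng]
    simpa using (tendsto_pow_atTop_nhds_zero_of_norm_lt_one hq).const_mul (q : ℂ)
  have hl : Continuous fun b : {t : ℂ // ‖t‖ < 1} =>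
      (2 * (Real.pi : ℂ))⁻¹ * awInner q a b c d n m :=
    continuous_const.mul (awInner_continuous hq hA hC hD n m)
  have hr : Continuous fun b : {t : ℂ // ‖t‖ < 1} =>
      if m = n then awh q a b c d n else 0 := by
    split_ifs
    · exact awh_continuous hq hA hC hD n
    · exact continuous_const
  have h1 := (hl.tendsto _).comp hu
  have h2 := (hr.tendsto _).comp hu
  refine tendsto_nhds_unique h1 (h2.congr fun k => ?_)
  exact (awOrtho_of_ne hq0 hq1 ha (mul_ne_zero hqC (pow_ne_zero k hqC)) hA
    (u k).2 hC hD m n).symm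

/-! ### Positivity of the weight -/

/-- On the unit circle `conj z = z⁻¹`, so conjugation invariance of the parameters turns the weight
into the quotient of squared moduli `|(z²;q)_∞|² / |∏_t (tz;q)_∞|²`. -/
lemma AWw_nonneg {q : ℝ} (hq : ‖(q : ℂ)‖ < 1) {a b c d z : ℂ} (hz : ‖z‖ = 1)
    (h : ({a, b, c, d} : Multiset ℂ).map (starRingEnd ℂ) = {a, b, c, d}) :
    ∃ w : ℝ, 0 ≤ w ∧ AWw q a b c d z = (w : ℂ) := by
  have hconj : starRingEnd ℂ z = z⁻¹ := (Complex.inv_eq_conj hz).symm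
  have hprod : ∀ y : ℂ, (({a, b, c, d} : Multiset ℂ).map fun t => qpi q (t * y)).prod =
      qpi q (a * y) * qpi q (b * y) * qpi q (c * y) * qpi q (d * y) := fun y => by
    simp [mul_assoc]
  have hnum : qpi q (z⁻¹ ^ 2) = starRingEnd ℂ (qpi q (z ^ 2)) := by
    rw [qpi_conj q _ hq, map_pow, hconj]
  have hden : qpi q (a * z⁻¹) * qpi q (b * z⁻¹) * qpi q (c * z⁻¹) * qpi q (d * z⁻¹) =
      starRingEnd ℂ (qpi q (a * z) * qpi q (b * z) * qpi q (c * z) * qpi q (d * z)) := by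
    rw [← hprod, ← hprod, map_multiset_prod, Multiset.map_map]
    nth_rewrite 1 [← h]
    rw [Multiset.map_map]
    congr 1
    refine Multiset.map_congr rfl fun t _ => ?_
    simp only [Function.comp_apply]
    rw [qpi_conj q _ hq, map_mul, hconj]
  refine ⟨Complex.normSq (qpi q (z ^ 2)) / Complex.normSq
    (qpi q (a * z) * qpi q (b * z) * qpi q (c * z) * qpi q (d * z)),
    div_nonneg (Complex.normSq_nonneg _) (Complex.normSq_nonneg _), ?_⟩
  rw [Complex.ofReal_div, ← Complex.mul_conj, ← Complex.mul_conj, ← hnum, ← hden, AWw]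
  congr 1
  ring

/-- Orthogonality of the Askey-Wilson polynomials (here `a ≠ 0`, as in the defining
formula): for `0<q<1` and `|a|,|b|,|c|,|d|<1`,
`(2π)⁻¹ ∫_0^π p_n(cos θ) p_m(cos θ) w_{a,b,c,d}(e^{iθ}) dθ = δ_{m,n} h_n`.
Moreover, if `{a,b,c,d}` is invariant under complex conjugation (i.e. the parameters
are real or occur in complex-conjugate pairs) then the weight `w_{a,b,c,d}(e^{iθ})`
is a nonnegative real number for each `θ ∈ [0,π]`. -/
theorem stmt19 (q : ℝ) (hq0 : 0 < q) (hq1 : q < 1) (a b c d : ℂ) (ha0 : a ≠ 0)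
    (hA : ‖a‖ < 1) (hB : ‖b‖ < 1) (hC : ‖c‖ < 1) (hD : ‖d‖ < 1) :
    (∀ m n : ℕ,
      (2 * (Real.pi : ℂ))⁻¹ *
          ∫ θ in (0 : ℝ)..Real.pi,
            awp (q : ℂ) a b c d n ((Real.cos θ : ℝ) : ℂ) *
              awp (q : ℂ) a b c d m ((Real.cos θ : ℝ) : ℂ) *
              AWw (q : ℂ) a b c d (Complex.exp ((θ : ℂ) * Complex.I)) =
        if m = n then awh (q : ℂ) a b c d n else 0) ∧
    ((({a, b, c, d} : Multiset ℂ).map (starRingEnd ℂ) = {a, b, c, d}) →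
      ∀ θ : ℝ, θ ∈ Set.Icc (0 : ℝ) Real.pi →
        ∃ w : ℝ, 0 ≤ w ∧
          AWw (q : ℂ) a b c d (Complex.exp ((θ : ℂ) * Complex.I)) = (w : ℂ)) := by
  exact ⟨fun m n => awOrtho hq0 hq1 ha0 hA hB hC hD m n,
    fun h θ _ => AWw_nonneg (norm_ofReal_lt hq0 hq1) (norm_expI θ) h⟩
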